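/- arXiv:2105.06848 — 2 statements merged into one kernel-verified Lean document; each statement's English description precedes it below -/
import Mathlib

section
/- Fix 1/2 < σ_L < σ_R < 1, a nonnegative integer m, and an open rectangle R ⊂ {σ_L < Re(s) < σ_R}. For any f holomorphic on R, any compact subset K ⊂ R, and any ε > 0, there exist unimodular numbers (c(p))_p, one for each prime p, such that the series ∑_p Li_{m+1}(p^{-s} c(p)) / (log p)^m converges locally uniformly on R and sup_{s ∈ K} |∑_p Li_{m+1}(p^{-s} c(p))/(log p)^m − f(s)| < ε. -/
open Complex Filter

/-- The polylogarithm `Li_{m+1}(z) = ∑_{k=1}^∞ z^k / k^{m+1}` for `|z| < 1`. -/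
noncomputable def polylog (m : ℕ) (z : ℂ) : ℂ :=
  ∑' k : ℕ, z ^ (k + 1) / ((k : ℂ) + 1) ^ (m + 1)

/-!
Finitely many terms of the series are made to approximate `f` in the Hilbert space `L²(Q)` of a
compact rectangle `Q` slightly larger than `K`. If every functional `Φ` with `∑ |Φ (xₚ)| < ∞`
annihilates `f`, then by Hahn–Banach `f` is a limit of combinations of the `xₚ` with coefficients of
modulus at most `1`, and rounding these to unimodular ones costs at most `∑ ‖xₚ‖²`, which is small
once finitely many primes are discarded; Bergman's inequality turns `L²` into uniform approximation.

For `xₚ = p⁻ˢ / (log p)ᵐ`, the annihilation is proved by analytic continuation rather than by the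
prime number theorem. Absolute convergence makes `w ↦ ∑ Λ(n) Φ(n⁻ˢ) n⁻ʷ` holomorphic for `Re w > 0`.
Since `-ζ'/ζ` has a simple pole at `1` and no other singularity near the line `Re = 1`, this
continues the Cauchy transform of `Φ` into a strip beyond the left edge of `Q`. Deforming contours
replaces `Φ` by a functional on a rectangle whose left edge is further to the right, and after
finitely many steps nothing is left.

Beyond the approximating block the coefficients alternate in sign along the primes, so summation by
parts makes the tail uniformly convergent and small. The terms with `k ≥ 2` of `Li_{m+1}` are
`O(p^{-2σ})`.
-/

open scoped Topology Interval Real ComplexConjugate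

section UnimodularCombinations

lemma convex_setOf_finsupp_norm_le_one (ι 𝕜 : Type*) [RCLike 𝕜] :
    Convex ℝ {a : ι →₀ 𝕜 | ∀ i, ‖a i‖ ≤ 1} := by
  intro a ha b hb s t hs ht hst i
  simpa using convex_closedBall (0 : 𝕜) 1 (by simpa using ha i) (by simpa using hb i) hs ht hst

lemma mem_closure_linearCombination_of_summable {ι 𝕜 E : Type*} [RCLike 𝕜]
    [NormedAddCommGroup E] [NormedSpace 𝕜 E] {x : ι → E} {F : E}
    (hF : ∀ Φ : StrongDual 𝕜 E, (Summable fun i ↦ ‖Φ (x i)‖) → Φ F = 0) :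
    F ∈ closure (Finsupp.linearCombination 𝕜 x '' {a | ∀ i, ‖a i‖ ≤ 1}) := by
  classical
  let _ : NormedSpace ℝ E := NormedSpace.restrictScalars ℝ 𝕜 E
  have _ : IsScalarTower ℝ 𝕜 E := RestrictScalars.isScalarTower ℝ 𝕜 E
  set B := Finsupp.linearCombination 𝕜 x '' {a | ∀ i, ‖a i‖ ≤ 1}
  have hB : Convex ℝ B := (convex_setOf_finsupp_norm_le_one ι 𝕜).is_linear_image
    ((Finsupp.linearCombination 𝕜 x).restrictScalars ℝ).isLinear
  by_contra hFB
  obtain ⟨Φ, u, hΦB, hΦF⟩ :=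
    RCLike.geometric_hahn_banach_closed_point (𝕜 := 𝕜) hB.closure isClosed_closure hFB
  have hu : 0 < u := by
    simpa using hΦB 0 (subset_closure ⟨0, by simp, map_zero _⟩)
  -- Taking the phases `conj (Φ x_i) / |Φ x_i|` turns the bound on `Φ B` into absolute convergence.
  have hsum : Summable fun i ↦ ‖Φ (x i)‖ := by
    refine summable_of_sum_le (c := u) (fun _ ↦ norm_nonneg _) fun S ↦ ?_
    let a : ι →₀ 𝕜 := Finsupp.onFinset S
      (fun i ↦ if i ∈ S then conj (Φ (x i)) / ‖Φ (x i)‖ else 0) (by simp +contextual)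
    have ha : ∀ i, ‖a i‖ ≤ 1 := fun i ↦ by
      by_cases hi : i ∈ S <;> simp [a, hi, div_self_le_one]
    refine le_of_eq_of_le ?_ (hΦB _ (subset_closure ⟨a, ha, rfl⟩)).le
    rw [Finsupp.linearCombination_apply, Finsupp.onFinset_sum _ (by simp), map_sum, map_sum]
    refine Finset.sum_congr rfl fun i hi ↦ ?_
    rw [map_smul, smul_eq_mul, if_pos hi, div_mul_eq_mul_div, RCLike.conj_mul, sq,
      mul_self_div_self, RCLike.ofReal_re]
  rw [hF Φ hsum, map_zero] at hΦF
  exact hΦF.not_gt hu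

lemma exists_norm_add_eq_one_and_norm_sub_eq_one {a : ℂ} (ha : ‖a‖ ≤ 1) :
    ∃ v : ℂ, ‖v‖ ≤ 1 ∧ ‖a + v‖ = 1 ∧ ‖a - v‖ = 1 := by
  set e : ℂ := exp (arg a * I)
  have he : ‖e‖ = 1 := norm_exp_ofReal_mul_I _
  have hae : a = ‖a‖ * e := (norm_mul_exp_arg_mul_I a).symm
  set ρ : ℝ := √(1 - ‖a‖ ^ 2)
  have hρ : ‖a‖ ^ 2 + ρ ^ 2 = 1 := by
    rw [Real.sq_sqrt (by nlinarith [norm_nonneg a])]; ring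
  refine ⟨(ρ : ℂ) * I * e, ?_, ?_, ?_⟩
  · rw [norm_mul, he, norm_mul, norm_I, norm_real, mul_one, mul_one]
    exact abs_le_one_iff_mul_self_le_one.mpr (by nlinarith [norm_nonneg a])
  · have : a + ρ * I * e = (‖a‖ + ρ * I) * e := by rw [add_mul, ← hae]
    rw [this, norm_mul, he, mul_one, norm_add_mul_I, hρ, Real.sqrt_one]
  · have : a - ρ * I * e = (‖a‖ + (-ρ : ℝ) * I) * e := by
      rw [add_mul, ← hae, ofReal_neg]; ring
    rw [this, norm_mul, he, mul_one, norm_add_mul_I, neg_sq, hρ, Real.sqrt_one]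

variable {ι E : Type*} [NormedAddCommGroup E] [InnerProductSpace ℂ E]

/- By the parallelogram law one of the two perturbations `w ± v` costs at most `‖v‖ ^ 2`, so the
coefficients can be rounded one at a time. -/
lemma exists_unimodular_norm_add_sum_sq_le (x : ι → E) {a : ι → ℂ} (ha : ∀ i, ‖a i‖ ≤ 1)
    (y : E) (S : Finset ι) :
    ∃ c : ι → ℂ, (∀ i, ‖c i‖ = 1) ∧
      ‖y + ∑ i ∈ S, (c i - a i) • x i‖ ^ 2 ≤ ‖y‖ ^ 2 + ∑ i ∈ S, ‖x i‖ ^ 2 := by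
  classical
  induction S using Finset.induction_on with
  | empty => exact ⟨1, by simp, by simp⟩
  | insert k S hk ih =>
    obtain ⟨c, hc, hcS⟩ := ih
    set w := y + ∑ i ∈ S, (c i - a i) • x i with hw
    suffices ∃ d, ‖d‖ = 1 ∧ ‖w + (d - a k) • x k‖ ^ 2 ≤ ‖w‖ ^ 2 + ‖x k‖ ^ 2 by
      obtain ⟨d, hd, hdw⟩ := this
      refine ⟨Function.update c k d, fun i ↦ ?_, ?_⟩
      · rcases eq_or_ne i k with rfl | hik <;> simp [*]
      · have hsum : ∑ i ∈ S, (Function.update c k d i - a i) • x i =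
            ∑ i ∈ S, (c i - a i) • x i := Finset.sum_congr rfl fun i hi ↦ by
          rw [Function.update_of_ne (ne_of_mem_of_not_mem hi hk)]
        rw [Finset.sum_insert hk, Finset.sum_insert hk, Function.update_self, hsum,
          add_left_comm, ← hw, add_comm _ w]
        linarith
    obtain ⟨v, hv, hav, hav'⟩ := exists_norm_add_eq_one_and_norm_sub_eq_one (ha k)
    have hpar := parallelogram_law_with_norm ℂ w (v • x k)
    have hvx : ‖v • x k‖ ≤ ‖x k‖ := by
      rw [norm_smul]; exact mul_le_of_le_one_left (norm_nonneg _) hv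
    rcases le_total ‖w + v • x k‖ ‖w - v • x k‖ with h | h
    · refine ⟨a k + v, hav, ?_⟩
      rw [add_sub_cancel_left]
      nlinarith [norm_nonneg (w + v • x k), norm_nonneg (v • x k)]
    · refine ⟨a k - v, hav', ?_⟩
      rw [sub_sub_cancel_left, neg_smul, ← sub_eq_add_neg]
      nlinarith [norm_nonneg (w - v • x k), norm_nonneg (v • x k)]

theorem eventually_exists_unimodular_norm_sum_sub_sq_le {x : ι → E} {F : E}
    (hF : ∀ Φ : StrongDual ℂ E, (Summable fun i ↦ ‖Φ (x i)‖) → Φ F = 0) {ε : ℝ} (hε : 0 < ε) :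
    ∀ᶠ S : Finset ι in atTop, ∃ c : ι → ℂ, (∀ i, ‖c i‖ = 1) ∧
      ‖∑ i ∈ S, c i • x i - F‖ ^ 2 ≤ ε ^ 2 + ∑ i ∈ S, ‖x i‖ ^ 2 := by
  obtain ⟨_, ⟨a, ha, rfl⟩, hdist⟩ :=
    Metric.mem_closure_iff.mp (mem_closure_linearCombination_of_summable hF) ε hε
  filter_upwards [eventually_ge_atTop a.support] with S hS
  set y := ∑ i ∈ S, a i • x i - F with hy
  have hyε : ‖y‖ < ε := by
    rwa [hy, ← Finsupp.sum_of_support_subset a hS (fun i z ↦ z • x i) (by simp),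
      ← Finsupp.linearCombination_apply, ← dist_eq_norm, dist_comm]
  obtain ⟨c, hc, hcS⟩ := exists_unimodular_norm_add_sum_sq_le x ha y S
  refine ⟨c, hc, ?_⟩
  have hsub : ∑ i ∈ S, c i • x i - F = y + ∑ i ∈ S, (c i - a i) • x i := by
    simp only [hy, sub_smul, Finset.sum_sub_distrib]; abel
  rw [hsub]
  exact hcS.trans (by gcongr)

end UnimodularCombinations


section ContourIntegrals

variable {E F : Type*} [NormedAddCommGroup E] [NormedSpace ℂ E] [NormedAddCommGroup F]
  [NormedSpace ℂ F] {f g : ℂ → E} {z w : ℂ} {l r b t : ℝ}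

/-- The contour integral of `f` along the oriented segment from `z` to `w`. -/
noncomputable def segIntegral (f : ℂ → E) (z w : ℂ) : E :=
  ∫ τ in (0 : ℝ)..1, (w - z) • f (AffineMap.lineMap z w τ)

lemma lineMap_mem_segment_of_mem_uIcc {τ : ℝ} (hτ : τ ∈ [[0, 1]]) :
    AffineMap.lineMap z w τ ∈ segment ℝ z w :=
  lineMap_mem_segment ℝ z w (by rwa [Set.uIcc_of_le zero_le_one] at hτ)

lemma continuousOn_smul_comp_lineMap (hf : ContinuousOn f (segment ℝ z w)) :
    ContinuousOn (fun τ : ℝ ↦ (w - z) • f (AffineMap.lineMap z w τ)) [[0, 1]] :=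
  (hf.comp AffineMap.lineMap_continuous.continuousOn
    fun _ ↦ lineMap_mem_segment_of_mem_uIcc).const_smul _

lemma segIntegral_congr (h : Set.EqOn f g (segment ℝ z w)) :
    segIntegral f z w = segIntegral g z w :=
  intervalIntegral.integral_congr fun _ hτ ↦ by simp only [h (lineMap_mem_segment_of_mem_uIcc hτ)]

lemma segIntegral_add (hf : ContinuousOn f (segment ℝ z w)) (hg : ContinuousOn g (segment ℝ z w)) :
    segIntegral (fun s ↦ f s + g s) z w = segIntegral f z w + segIntegral g z w := by
  simp only [segIntegral, smul_add]
  exact intervalIntegral.integral_add (continuousOn_smul_comp_lineMap hf).intervalIntegrable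
    (continuousOn_smul_comp_lineMap hg).intervalIntegrable

lemma segIntegral_const_smul (a : ℂ) (f : ℂ → E) (z w : ℂ) :
    segIntegral (fun s ↦ a • f s) z w = a • segIntegral f z w := by
  simp only [segIntegral, smul_comm _ a, intervalIntegral.integral_smul]

lemma map_segIntegral [CompleteSpace E] [CompleteSpace F] (L : E →L[ℂ] F)
    (hf : ContinuousOn f (segment ℝ z w)) :
    L (segIntegral f z w) = segIntegral (fun s ↦ L (f s)) z w := by
  simp only [segIntegral, ← map_smul]
  exact (L.intervalIntegral_comp_comm
    (continuousOn_smul_comp_lineMap hf).intervalIntegrable).symm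

lemma norm_segIntegral_le {C : ℝ} (h : ∀ s ∈ segment ℝ z w, ‖f s‖ ≤ C) :
    ‖segIntegral f z w‖ ≤ ‖w - z‖ * C := by
  refine (intervalIntegral.norm_integral_le_of_norm_le_const (C := ‖w - z‖ * C)
    fun τ hτ ↦ ?_).trans_eq (by simp)
  rw [norm_smul]
  exact mul_le_mul_of_nonneg_left (h _ (lineMap_mem_segment_of_mem_uIcc (Set.uIoc_subset_uIcc hτ)))
    (norm_nonneg _)

lemma segIntegral_lineMap (f : ℂ → E) (z w : ℂ) (α β : ℝ) :
    segIntegral f (AffineMap.lineMap z w α) (AffineMap.lineMap z w β) =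
      ∫ τ in α..β, (w - z) • f (AffineMap.lineMap z w τ) := by
  have hpoint (τ : ℝ) : AffineMap.lineMap (AffineMap.lineMap z w α) (AffineMap.lineMap z w β) τ =
      AffineMap.lineMap z w ((β - α) * τ + α) := by
    simp only [AffineMap.lineMap_apply, vsub_eq_sub, vadd_eq_add, real_smul]
    push_cast
    ring
  have hdir : AffineMap.lineMap z w β - AffineMap.lineMap z w α = (β - α) • (w - z) := by
    simp only [AffineMap.lineMap_apply, vsub_eq_sub, vadd_eq_add, real_smul]
    push_cast
    ring
  simp only [segIntegral, hpoint, hdir, smul_assoc]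
  rw [intervalIntegral.integral_smul, intervalIntegral.smul_integral_comp_mul_add
    (fun τ : ℝ ↦ (w - z) • f (AffineMap.lineMap z w τ)), mul_zero, zero_add, mul_one,
    sub_add_cancel]

lemma segIntegral_symm (f : ℂ → E) (z w : ℂ) : segIntegral f w z = -segIntegral f z w := by
  rw [segIntegral.eq_def f z w, ← intervalIntegral.integral_symm, ← segIntegral_lineMap,
    AffineMap.lineMap_apply_one, AffineMap.lineMap_apply_zero]

lemma segIntegral_add_segIntegral {v : ℂ} (hv : v ∈ segment ℝ z w)
    (hf : ContinuousOn f (segment ℝ z w)) :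
    segIntegral f z v + segIntegral f v w = segIntegral f z w := by
  rw [segment_eq_image_lineMap] at hv
  obtain ⟨μ, hμ, rfl⟩ := hv
  have h₁ := segIntegral_lineMap f z w 0 μ
  have h₂ := segIntegral_lineMap f z w μ 1
  rw [AffineMap.lineMap_apply_zero] at h₁
  rw [AffineMap.lineMap_apply_one] at h₂
  have hμ' : μ ∈ [[0, 1]] := by rwa [Set.uIcc_of_le zero_le_one]
  have hint := continuousOn_smul_comp_lineMap hf
  rw [h₁, h₂, segIntegral]
  exact intervalIntegral.integral_add_adjacent_intervals
    (hint.mono (Set.uIcc_subset_uIcc_left hμ')).intervalIntegrable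
    (hint.mono (Set.uIcc_subset_uIcc_right hμ')).intervalIntegrable

lemma segIntegral_eq_sub_of_hasDerivWithinAt [CompleteSpace E] {P : ℂ → E} {U : Set ℂ}
    (hU : segment ℝ z w ⊆ U) (hP : ∀ s ∈ U, HasDerivWithinAt P (f s) U s)
    (hf : ContinuousOn f U) : segIntegral f z w = P w - P z := by
  have hderiv : ∀ τ ∈ Set.Icc (0 : ℝ) 1, HasDerivWithinAt
      (fun τ : ℝ ↦ P (AffineMap.lineMap z w τ)) ((w - z) • f (AffineMap.lineMap z w τ))
      (Set.Icc 0 1) τ := fun τ hτ ↦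
    (hP _ (hU (lineMap_mem_segment ℝ z w hτ))).scomp τ
      AffineMap.hasDerivWithinAt_lineMap fun _ hτ ↦ hU (lineMap_mem_segment ℝ z w hτ)
  have hint := (continuousOn_smul_comp_lineMap (hf.mono hU)).intervalIntegrable
    (μ := MeasureTheory.volume)
  have := intervalIntegral.integral_eq_sub_of_hasDerivAt_of_le zero_le_one
    (fun τ hτ ↦ (hderiv τ hτ).continuousWithinAt)
    (fun τ hτ ↦ (hderiv τ (Set.Ioo_subset_Icc_self hτ)).hasDerivAt (Icc_mem_nhds hτ.1 hτ.2)) hint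
  rwa [AffineMap.lineMap_apply_one, AffineMap.lineMap_apply_zero] at this

/-- The counterclockwise contour integral of `f` along the boundary of the rectangle with
lower left corner `l + b i` and upper right corner `r + t i`. -/
noncomputable def rectIntegral (f : ℂ → E) (l r b t : ℝ) : E :=
  segIntegral f ⟨l, b⟩ ⟨r, b⟩ + segIntegral f ⟨r, b⟩ ⟨r, t⟩ + segIntegral f ⟨r, t⟩ ⟨l, t⟩ +
    segIntegral f ⟨l, t⟩ ⟨l, b⟩

/-- The trace of the contour over which `rectIntegral` integrates. -/
def rectFrame (l r b t : ℝ) : Set ℂ :=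
  segment ℝ ⟨l, b⟩ ⟨r, b⟩ ∪ segment ℝ ⟨r, b⟩ ⟨r, t⟩ ∪ segment ℝ ⟨r, t⟩ ⟨l, t⟩ ∪
    segment ℝ ⟨l, t⟩ ⟨l, b⟩

lemma convex_reProdIm {A B : Set ℝ} (hA : Convex ℝ A) (hB : Convex ℝ B) :
    Convex ℝ (A ×ℂ B) :=
  (hA.linear_preimage reLm).inter (hB.linear_preimage imLm)

lemma segment_horizontal_subset (hlr : l ≤ r) (y : ℝ) :
    segment ℝ (⟨l, y⟩ : ℂ) ⟨r, y⟩ ⊆ Set.Icc l r ×ℂ {y} :=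
  (convex_reProdIm (convex_Icc l r) (convex_singleton y)).segment_subset
    ⟨Set.left_mem_Icc.mpr hlr, rfl⟩ ⟨Set.right_mem_Icc.mpr hlr, rfl⟩

lemma segment_vertical_subset (hbt : b ≤ t) (x : ℝ) :
    segment ℝ (⟨x, b⟩ : ℂ) ⟨x, t⟩ ⊆ {x} ×ℂ Set.Icc b t :=
  (convex_reProdIm (convex_singleton x) (convex_Icc b t)).segment_subset
    ⟨rfl, Set.left_mem_Icc.mpr hbt⟩ ⟨rfl, Set.right_mem_Icc.mpr hbt⟩

lemma rectFrame_subset (hlr : l ≤ r) (hbt : b ≤ t) :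
    rectFrame l r b t ⊆ (Set.Icc l r ×ℂ Set.Icc b t) \ (Set.Ioo l r ×ℂ Set.Ioo b t) := by
  rintro s (((hs | hs) | hs) | hs)
  · obtain ⟨hre, him : s.im = b⟩ := segment_horizontal_subset hlr b hs
    exact ⟨⟨hre, him.ge, him.le.trans hbt⟩, fun h ↦ h.2.1.ne' him⟩
  · obtain ⟨hre : s.re = r, him⟩ := segment_vertical_subset hbt r hs
    exact ⟨⟨⟨hlr.trans hre.ge, hre.le⟩, him⟩, fun h ↦ h.1.2.ne hre⟩
  · rw [segment_symm] at hs
    obtain ⟨hre, him : s.im = t⟩ := segment_horizontal_subset hlr t hs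
    exact ⟨⟨hre, hbt.trans him.ge, him.le⟩, fun h ↦ h.2.2.ne him⟩
  · rw [segment_symm] at hs
    obtain ⟨hre : s.re = l, him⟩ := segment_vertical_subset hbt l hs
    exact ⟨⟨⟨hre.ge, hre.le.trans hlr⟩, him⟩, fun h ↦ h.1.1.ne' hre⟩

lemma rectFrame_subset_reProdIm {A B : Set ℝ} (hlr : l ≤ r) (hbt : b ≤ t) (hA : Set.Icc l r ⊆ A)
    (hB : Set.Icc b t ⊆ B) : rectFrame l r b t ⊆ A ×ℂ B := fun _ hz ↦
  let hz' := (rectFrame_subset hlr hbt hz).1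
  ⟨hA hz'.1, hB hz'.2⟩

lemma rectIntegral_congr (h : Set.EqOn f g (rectFrame l r b t)) :
    rectIntegral f l r b t = rectIntegral g l r b t := by
  simp only [rectFrame, Set.eqOn_union] at h
  obtain ⟨⟨⟨hb, hr⟩, ht⟩, hl⟩ := h
  rw [rectIntegral, segIntegral_congr hb, segIntegral_congr hr, segIntegral_congr ht,
    segIntegral_congr hl, rectIntegral]

lemma continuousOn_sides_of_rectFrame {X : Type*} [TopologicalSpace X] {f : ℂ → X}
    (hf : ContinuousOn f (rectFrame l r b t)) :
    ContinuousOn f (segment ℝ ⟨l, b⟩ ⟨r, b⟩) ∧ ContinuousOn f (segment ℝ ⟨r, b⟩ ⟨r, t⟩) ∧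
      ContinuousOn f (segment ℝ ⟨r, t⟩ ⟨l, t⟩) ∧ ContinuousOn f (segment ℝ ⟨l, t⟩ ⟨l, b⟩) :=
  ⟨hf.mono fun _ h ↦ .inl (.inl (.inl h)), hf.mono fun _ h ↦ .inl (.inl (.inr h)),
    hf.mono fun _ h ↦ .inl (.inr h), hf.mono fun _ h ↦ .inr h⟩

lemma rectIntegral_add (hf : ContinuousOn f (rectFrame l r b t))
    (hg : ContinuousOn g (rectFrame l r b t)) :
    rectIntegral (fun s ↦ f s + g s) l r b t = rectIntegral f l r b t + rectIntegral g l r b t := by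
  obtain ⟨hfb, hfr, hft, hfl⟩ := continuousOn_sides_of_rectFrame hf
  obtain ⟨hgb, hgr, hgt, hgl⟩ := continuousOn_sides_of_rectFrame hg
  simp only [rectIntegral, segIntegral_add hfb hgb, segIntegral_add hfr hgr,
    segIntegral_add hft hgt, segIntegral_add hfl hgl]
  abel

lemma rectIntegral_const_smul (a : ℂ) (f : ℂ → E) (l r b t : ℝ) :
    rectIntegral (fun s ↦ a • f s) l r b t = a • rectIntegral f l r b t := by
  simp only [rectIntegral, segIntegral_const_smul, smul_add]

lemma map_rectIntegral [CompleteSpace E] [CompleteSpace F] (L : E →L[ℂ] F)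
    (hf : ContinuousOn f (rectFrame l r b t)) :
    L (rectIntegral f l r b t) = rectIntegral (fun s ↦ L (f s)) l r b t := by
  obtain ⟨hb, hr, ht, hl⟩ := continuousOn_sides_of_rectFrame hf
  simp only [rectIntegral, map_add, map_segIntegral L hb, map_segIntegral L hr,
    map_segIntegral L ht, map_segIntegral L hl]

lemma rectIntegral_eq_zero_of_differentiableOn [CompleteSpace E] {U : Set ℂ} (hU : Convex ℝ U)
    (hf : DifferentiableOn ℂ f U) (hfU : rectFrame l r b t ⊆ U) : rectIntegral f l r b t = 0 := by
  obtain ⟨P, hP⟩ := hU.exists_forall_hasDerivWithinAt hf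
  simp only [rectFrame, Set.union_subset_iff] at hfU
  obtain ⟨⟨⟨hb, hr⟩, ht⟩, hl⟩ := hfU
  simp only [rectIntegral, segIntegral_eq_sub_of_hasDerivWithinAt hb hP hf.continuousOn,
    segIntegral_eq_sub_of_hasDerivWithinAt hr hP hf.continuousOn,
    segIntegral_eq_sub_of_hasDerivWithinAt ht hP hf.continuousOn,
    segIntegral_eq_sub_of_hasDerivWithinAt hl hP hf.continuousOn]
  abel

lemma rectIntegral_add_rectIntegral {c : ℝ} (hlc : l ≤ c) (hcr : c ≤ r)
    (hf : ContinuousOn f (rectFrame l r b t)) :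
    rectIntegral f l c b t + rectIntegral f c r b t = rectIntegral f l r b t := by
  have hmem (y : ℝ) : (⟨c, y⟩ : ℂ) ∈ segment ℝ (⟨l, y⟩ : ℂ) ⟨r, y⟩ := by
    obtain ⟨α, β, hα, hβ, hαβ, h⟩ := Convex.mem_Icc (hlc.trans hcr) |>.mp ⟨hlc, hcr⟩
    refine ⟨α, β, hα, hβ, hαβ, Complex.ext (by simp [h]) ?_⟩
    simp [← add_mul, hαβ]
  obtain ⟨hb, -, ht, -⟩ := continuousOn_sides_of_rectFrame hf
  simp only [rectIntegral, ← segIntegral_add_segIntegral (hmem b) hb,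
    ← segIntegral_add_segIntegral (segment_symm ℝ (⟨l, t⟩ : ℂ) ⟨r, t⟩ ▸ hmem t) ht,
    segIntegral_symm f ⟨c, b⟩ ⟨c, t⟩]
  abel

lemma segIntegral_inv_sub {s c : ℂ} (hc : c ≠ 0)
    (h : ∀ v ∈ segment ℝ z w, c * (v - s) ∈ slitPlane) :
    segIntegral (fun v ↦ (v - s)⁻¹) z w = log (c * (w - s)) - log (c * (z - s)) := by
  refine segIntegral_eq_sub_of_hasDerivWithinAt (P := fun v ↦ log (c * (v - s)))
    (U := segment ℝ z w) subset_rfl (fun v hv ↦ ?_) ?_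
  · have := ((hasDerivAt_id v).sub_const s |>.const_mul c).clog (h v hv)
    rw [mul_div_mul_left _ _ hc, one_div] at this
    exact this.hasDerivWithinAt
  · exact (continuousOn_id.sub continuousOn_const).inv₀ fun v hv ↦
      right_ne_zero_of_mul (slitPlane_ne_zero (h v hv))

lemma log_neg_of_im_pos {z : ℂ} (hz : 0 < z.im) : log (-z) = log z - π * I := by
  rw [log, log, norm_neg, arg_neg_eq_arg_sub_pi_of_im_pos hz]; push_cast; ring

lemma log_neg_of_im_neg {z : ℂ} (hz : z.im < 0) : log (-z) = log z + π * I := by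
  rw [log, log, norm_neg, arg_neg_eq_arg_add_pi_of_im_neg hz]; push_cast; ring

lemma rectIntegral_inv_sub {s : ℂ} (hs : s ∈ Set.Ioo l r ×ℂ Set.Ioo b t) :
    rectIntegral (fun z ↦ (z - s)⁻¹) l r b t = 2 * π * I := by
  obtain ⟨⟨hl, hr⟩, hb, ht⟩ := hs
  -- `log (z - s)` is a primitive along three of the sides, `log (s - z)` along the left one.
  have bottom := segIntegral_inv_sub (z := ⟨l, b⟩) (w := ⟨r, b⟩) (s := s) one_ne_zero fun v hv ↦ by
    have : v.im = b := (segment_horizontal_subset (hl.trans hr).le b hv).2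
    exact Or.inr (by simpa [this] using (sub_neg_of_lt hb).ne)
  have right := segIntegral_inv_sub (z := ⟨r, b⟩) (w := ⟨r, t⟩) (s := s) one_ne_zero fun v hv ↦ by
    have : v.re = r := (segment_vertical_subset (hb.trans ht).le r hv).1
    exact Or.inl (by simpa [this] using hr)
  have top := segIntegral_inv_sub (z := ⟨r, t⟩) (w := ⟨l, t⟩) (s := s) one_ne_zero fun v hv ↦ by
    rw [segment_symm] at hv
    have : v.im = t := (segment_horizontal_subset (hl.trans hr).le t hv).2
    exact Or.inr (by simpa [this] using (sub_pos_of_lt ht).ne')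
  have left := segIntegral_inv_sub (z := ⟨l, t⟩) (w := ⟨l, b⟩) (s := s)
    (neg_ne_zero.mpr one_ne_zero) fun v hv ↦ by
      rw [segment_symm] at hv
      have : v.re = l := (segment_vertical_subset (hb.trans ht).le l hv).1
      exact Or.inl (by simpa [this] using hl)
  simp only [one_mul, neg_one_mul] at bottom right top left
  rw [rectIntegral, bottom, right, top, left,
    log_neg_of_im_neg (z := ⟨l, b⟩ - s) (by simpa using hb),
    log_neg_of_im_pos (z := ⟨l, t⟩ - s) (by simpa using ht)]
  ring

theorem rectIntegral_smul_inv_sub [CompleteSpace E] {U : Set ℂ} (hU : Convex ℝ U)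
    (hUo : IsOpen U) (hf : DifferentiableOn ℂ f U) (hfU : rectFrame l r b t ⊆ U)
    {s : ℂ} (hsU : s ∈ U) (hs : s ∈ Set.Ioo l r ×ℂ Set.Ioo b t) :
    rectIntegral (fun z ↦ (z - s)⁻¹ • f z) l r b t = (2 * π * I) • f s := by
  have hsf : ∀ z ∈ rectFrame l r b t, z - s ≠ 0 := fun z hz h ↦
    (rectFrame_subset (hs.1.1.trans hs.1.2).le (hs.2.1.trans hs.2.2).le hz).2
      (sub_eq_zero.mp h ▸ hs)
  have hd : DifferentiableOn ℂ (dslope f s) U :=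
    (differentiableOn_dslope (hUo.mem_nhds hsU)).mpr hf
  have hinv : ContinuousOn (fun z ↦ (z - s)⁻¹) (rectFrame l r b t) :=
    (continuousOn_id.sub continuousOn_const).inv₀ hsf
  calc rectIntegral (fun z ↦ (z - s)⁻¹ • f z) l r b t
      = rectIntegral (fun z ↦ dslope f s z + (z - s)⁻¹ • f s) l r b t :=
        rectIntegral_congr fun z hz ↦ by
          simp only [dslope_of_ne _ (sub_ne_zero.mp (hsf z hz)), slope_def_module, smul_sub,
            sub_add_cancel]
    _ = rectIntegral (dslope f s) l r b t
          + ContinuousLinearMap.toSpanSingleton ℂ (f s)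
            (rectIntegral (fun z ↦ (z - s)⁻¹) l r b t) := by
        rw [rectIntegral_add (g := fun z ↦ (z - s)⁻¹ • f s) (hd.continuousOn.mono hfU)
            (hinv.smul continuousOn_const),
          map_rectIntegral _ hinv]
        rfl
    _ = (2 * π * I) • f s := by
        rw [rectIntegral_eq_zero_of_differentiableOn hU hd hfU, rectIntegral_inv_sub hs, zero_add,
          ContinuousLinearMap.toSpanSingleton_apply]

end ContourIntegrals

section FunctionalsOnContinuousFunctions

variable {E : Type*} [NormedAddCommGroup E] [NormedSpace ℂ E]

lemma differentiableOn_of_forall_comp_differentiableOn [CompleteSpace E] {ι : Type*}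
    {L : ι → StrongDual ℂ E} (hL : ∀ x y, (∀ i, L i x = L i y) → x = y) {U : Set ℂ}
    (hU : IsOpen U) {f : ℂ → E} (hf : ContinuousOn f U)
    (hd : ∀ i, DifferentiableOn ℂ (fun z ↦ L i (f z)) U) : DifferentiableOn ℂ f U := by
  intro c hc
  obtain ⟨ρ, hρ, hball⟩ := Metric.nhds_basis_closedBall.mem_iff.mp (hU.mem_nhds hc)
  lift ρ to NNReal using hρ.le
  have hfρ : ContinuousOn f (Metric.sphere c ρ) :=
    hf.mono (Metric.sphere_subset_closedBall.trans hball)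
  have hcauchy := (hasFPowerSeriesOn_cauchy_integral (hfρ.circleIntegrable ρ.2)
    (by exact_mod_cast hρ)).differentiableOn.differentiableAt
      (Metric.eball_mem_nhds c (by exact_mod_cast hρ))
  refine (hcauchy.congr_of_eventuallyEq ?_).differentiableWithinAt
  filter_upwards [Metric.ball_mem_nhds c hρ] with w hw
  have hinv : ContinuousOn (fun z ↦ (z - w)⁻¹) (Metric.sphere c ρ) :=
    (continuousOn_id.sub continuousOn_const).inv₀ fun z hz ↦ sub_ne_zero.mpr fun h : z = w ↦
      (Metric.mem_ball.mp hw).ne (Metric.mem_sphere.mp (h ▸ hz))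
  have hint : CircleIntegrable (fun z ↦ (z - w)⁻¹ • f z) c ρ :=
    (hinv.smul hfρ).circleIntegrable ρ.2
  refine hL _ _ fun i ↦ ?_
  calc L i (f w) = (2 * π * I : ℂ)⁻¹ • ∮ z in C(c, ρ), (z - w)⁻¹ • L i (f z) := by
        rw [((hd i).mono hball).circleIntegral_sub_inv_smul hw, inv_smul_smul₀ two_pi_I_ne_zero]
    _ = L i ((2 * π * I : ℂ)⁻¹ • ∮ z in C(c, ρ), (z - w)⁻¹ • f z) := by
        have := (L i).intervalIntegral_comp_comm hint.out
        simp only [map_smul] at this ⊢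
        rw [circleIntegral, circleIntegral, ← this]

/-- The restriction of `f` to `Q` as an element of the space of continuous functions on `Q`; it
has the junk value `0` if `f` is not continuous on `Q`. -/
noncomputable def restrictTo (Q : Set ℂ) (f : ℂ → ℂ) : C(Q, ℂ) :=
  ContinuousMap.mkD (Q.domRestrict f) 0

variable {Q : Set ℂ} {f : ℂ → ℂ}

lemma restrictTo_apply (hf : ContinuousOn f Q) (s : Q) : restrictTo Q f s = f s :=
  ContinuousMap.mkD_apply_of_continuousOn hf

variable (Q) in
lemma continuousOn_uncurry_inv_sub :
    ContinuousOn (Function.uncurry fun z s : ℂ ↦ (z - s)⁻¹) (Qᶜ ×ˢ Q) :=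
  (continuousOn_fst.sub continuousOn_snd).inv₀ fun _ h ↦
    sub_ne_zero.mpr fun heq ↦ h.1 (heq ▸ h.2)

lemma continuousOn_extend_zero (h : C(Q, ℂ)) :
    ContinuousOn (Function.extend Subtype.val h 0) Q := by
  rw [continuousOn_iff_continuous_domRestrict]
  convert h.continuous
  ext s
  exact Subtype.val_injective.extend_apply _ _ s

variable [CompactSpace Q]

lemma differentiableOn_apply_restrictTo (Φ : StrongDual ℂ C(Q, ℂ)) {U : Set ℂ} (hU : IsOpen U)
    {k : ℂ → ℂ → ℂ} (hk : ContinuousOn (Function.uncurry k) (U ×ˢ Q))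
    (hd : ∀ s ∈ Q, DifferentiableOn ℂ (fun z ↦ k z s) U) :
    DifferentiableOn ℂ (fun z ↦ Φ (restrictTo Q (k z))) U := by
  refine Φ.differentiable.comp_differentiableOn <|
    differentiableOn_of_forall_comp_differentiableOn (L := fun s : Q ↦ ContinuousMap.evalCLM ℂ s)
      (fun _ _ ↦ ContinuousMap.ext) hU
      (ContinuousMap.continuousOn_mkD_restrict_of_uncurry k 0 hk)
      fun s ↦ (hd s s.2).congr fun z hz ↦ restrictTo_apply ?_ s
  exact hk.comp (Continuous.prodMk_right z).continuousOn fun s hs ↦ ⟨hz, hs⟩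

/-- The Cauchy transform of a functional on the continuous functions on `Q`. -/
noncomputable def cauchyTransform (Φ : StrongDual ℂ C(Q, ℂ)) (z : ℂ) : ℂ :=
  Φ (restrictTo Q fun s ↦ (z - s)⁻¹)

lemma differentiableOn_cauchyTransform (Φ : StrongDual ℂ C(Q, ℂ)) :
    DifferentiableOn ℂ (cauchyTransform Φ) Qᶜ :=
  differentiableOn_apply_restrictTo Φ (isCompact_iff_compactSpace.mpr ‹_›).isClosed.isOpen_compl
    (continuousOn_uncurry_inv_sub Q) fun s hs ↦
      (differentiableOn_id.sub_const s).inv fun z hz ↦ sub_ne_zero.mpr fun h : z = s ↦ hz (h ▸ hs)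

variable {l r b t : ℝ}

theorem two_pi_I_smul_apply_restrictTo (Φ : StrongDual ℂ C(Q, ℂ)) {U : Set ℂ} (hU : Convex ℝ U)
    (hUo : IsOpen U) (hf : DifferentiableOn ℂ f U) (hfU : rectFrame l r b t ⊆ U)
    (hQU : Q ⊆ U) (hQ : Q ⊆ Set.Ioo l r ×ℂ Set.Ioo b t) (hlr : l ≤ r) (hbt : b ≤ t) :
    (2 * π * I) • Φ (restrictTo Q f) =
      rectIntegral (fun z ↦ f z * cauchyTransform Φ z) l r b t := by
  have hframe : rectFrame l r b t ⊆ Qᶜ := fun z hz hzQ ↦ (rectFrame_subset hlr hbt hz).2 (hQ hzQ)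
  have hkernel : ContinuousOn (fun z ↦ f z • restrictTo Q fun s ↦ (z - s)⁻¹)
      (rectFrame l r b t) :=
    (hf.continuousOn.mono hfU).smul <| (ContinuousMap.continuousOn_mkD_restrict_of_uncurry _ 0
      (continuousOn_uncurry_inv_sub Q)).mono hframe
  have hcauchy : (2 * π * I) • restrictTo Q f =
      rectIntegral (fun z ↦ f z • restrictTo Q fun s ↦ (z - s)⁻¹) l r b t := by
    ext s
    have heval : ∀ z ∈ rectFrame l r b t, (restrictTo Q fun s ↦ (z - s)⁻¹) s = (z - s)⁻¹ :=
      fun z hz ↦ restrictTo_apply ((continuousOn_uncurry_inv_sub Q).comp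
        (Continuous.prodMk_right z).continuousOn fun s hs ↦ ⟨hframe hz, hs⟩) s
    change _ = (ContinuousMap.evalCLM ℂ s : C(Q, ℂ) →L[ℂ] ℂ) (rectIntegral _ l r b t)
    rw [map_rectIntegral _ hkernel, ContinuousMap.smul_apply,
      restrictTo_apply (hf.continuousOn.mono hQU),
      ← rectIntegral_smul_inv_sub hU hUo hf hfU (hQU s.2) (hQ s.2)]
    exact rectIntegral_congr fun z hz ↦ by
      simp only [ContinuousMap.evalCLM_apply, ContinuousMap.smul_apply, heval z hz, smul_eq_mul,
        mul_comm]
  rw [← map_smul, hcauchy, map_rectIntegral Φ hkernel]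
  simp only [map_smul, smul_eq_mul, cauchyTransform]

lemma exists_apply_restrictTo_eq_segIntegral {z w : ℂ} (hzw : segment ℝ z w ⊆ Q) {M : ℂ → ℂ}
    (hM : ContinuousOn M (segment ℝ z w)) :
    ∃ Ψ : StrongDual ℂ C(Q, ℂ), ∀ f, ContinuousOn f Q →
      Ψ (restrictTo Q f) = segIntegral (fun s ↦ f s * M s) z w := by
  have hcompact : IsCompact (segment ℝ z w) := by
    rw [segment_eq_image_lineMap]
    exact isCompact_Icc.image AffineMap.lineMap_continuous
  obtain ⟨B, hB⟩ := hcompact.exists_bound_of_continuousOn hM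
  have hcont (h : C(Q, ℂ)) :
      ContinuousOn (fun s ↦ Function.extend Subtype.val h 0 s * M s) (segment ℝ z w) :=
    ((continuousOn_extend_zero h).mono hzw).mul hM
  have hext (h : C(Q, ℂ)) {s : ℂ} (hs : s ∈ segment ℝ z w) :
      Function.extend Subtype.val h 0 s = h ⟨s, hzw hs⟩ :=
    Subtype.val_injective.extend_apply h 0 ⟨s, hzw hs⟩
  let Ψ : C(Q, ℂ) →ₗ[ℂ] ℂ :=
    { toFun := fun h ↦ segIntegral (fun s ↦ Function.extend Subtype.val h 0 s * M s) z w
      map_add' := fun h₁ h₂ ↦ by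
        rw [← segIntegral_add (hcont h₁) (hcont h₂)]
        exact segIntegral_congr fun s hs ↦ by
          simp only [hext _ hs, ContinuousMap.add_apply, add_mul]
      map_smul' := fun a h ↦ by
        rw [RingHom.id_apply, ← segIntegral_const_smul]
        exact segIntegral_congr fun s hs ↦ by
          simp only [hext _ hs, ContinuousMap.smul_apply, smul_eq_mul, mul_assoc] }
  refine ⟨Ψ.mkContinuous (‖w - z‖ * B) fun h ↦ ?_, fun f hf ↦ ?_⟩
  swap
  · refine segIntegral_congr (f := fun s ↦ Function.extend Subtype.val (restrictTo Q f) 0 s * M s)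
      fun s hs ↦ ?_
    simp only [hext _ hs, restrictTo_apply hf]
  rw [mul_assoc]
  refine norm_segIntegral_le (f := fun s ↦ Function.extend Subtype.val h 0 s * M s) fun s hs ↦ ?_
  rw [norm_mul, hext _ hs, mul_comm]
  exact mul_le_mul (hB s hs) (h.norm_coe_le_norm _) (norm_nonneg _)
    ((norm_nonneg _).trans (hB s hs))

lemma exists_apply_restrictTo_eq_rectIntegral (hQ : rectFrame l r b t ⊆ Q) {M : ℂ → ℂ}
    (hM : ContinuousOn M (rectFrame l r b t)) :
    ∃ Ψ : StrongDual ℂ C(Q, ℂ), ∀ f, ContinuousOn f Q →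
      Ψ (restrictTo Q f) = rectIntegral (fun s ↦ f s * M s) l r b t := by
  simp only [rectFrame, Set.union_subset_iff] at hQ
  obtain ⟨⟨⟨hQ₁, hQ₂⟩, hQ₃⟩, hQ₄⟩ := hQ
  obtain ⟨hM₁, hM₂, hM₃, hM₄⟩ := continuousOn_sides_of_rectFrame hM
  obtain ⟨Ψ₁, h₁⟩ := exists_apply_restrictTo_eq_segIntegral hQ₁ hM₁
  obtain ⟨Ψ₂, h₂⟩ := exists_apply_restrictTo_eq_segIntegral hQ₂ hM₂
  obtain ⟨Ψ₃, h₃⟩ := exists_apply_restrictTo_eq_segIntegral hQ₃ hM₃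
  obtain ⟨Ψ₄, h₄⟩ := exists_apply_restrictTo_eq_segIntegral hQ₄ hM₄
  refine ⟨Ψ₁ + Ψ₂ + Ψ₃ + Ψ₄, fun f hf ↦ ?_⟩
  simp only [add_apply, h₁ f hf, h₂ f hf, h₃ f hf, h₄ f hf, rectIntegral]

end FunctionalsOnContinuousFunctions

section AnalyticContinuation

lemma eqOn_of_convex_of_eqOn_open {U V : Set ℂ} {f g : ℂ → ℂ} (hU : Convex ℝ U)
    (hUo : IsOpen U) (hf : DifferentiableOn ℂ f U) (hg : DifferentiableOn ℂ g U) (hV : IsOpen V)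
    (hUV : (U ∩ V).Nonempty) (h : Set.EqOn f g V) : Set.EqOn f g U :=
  let ⟨_, hzU, hzV⟩ := hUV
  (hf.analyticOnNhd hUo).eqOn_of_preconnected_of_eventuallyEq (hg.analyticOnNhd hUo)
    hU.isPreconnected hzU (h.eventuallyEq_of_mem (hV.mem_nhds hzV))

instance compactSpace_Icc_reProdIm_Icc (l r b t : ℝ) :
    CompactSpace (Set.Icc l r ×ℂ Set.Icc b t : Set ℂ) :=
  isCompact_iff_compactSpace.mp (isCompact_Icc.reProdIm isCompact_Icc)

variable {l r b t y₁ y₂ x : ℝ} {Φ : StrongDual ℂ C((Set.Icc l r ×ℂ Set.Icc b t : Set ℂ), ℂ)}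
  {N D f : ℂ → ℂ}

lemma eqOn_cauchyTransform_of_eqOn_left (hb : b ∈ Set.Ioo y₁ y₂) (ht : y₁ ≤ t)
    (hN : DifferentiableOn ℂ N (Set.Iio x ×ℂ Set.Ioo y₁ y₂))
    (h : Set.EqOn N (cauchyTransform Φ) (Set.Iio l ×ℂ Set.Ioo y₁ y₂)) :
    Set.EqOn N (cauchyTransform Φ)
      ((Set.Iio x ×ℂ Set.Ioo y₁ y₂) \ (Set.Icc l r ×ℂ Set.Icc b t)) := by
  have extend {A B A' B' : Set ℝ} (hA : Convex ℝ A) (hAo : IsOpen A) (hB : Convex ℝ B)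
      (hBo : IsOpen B) (hA' : IsOpen A') (hB' : IsOpen B') (hAx : A ⊆ Set.Iio x)
      (hBy : B ⊆ Set.Ioo y₁ y₂) (hQ : A ×ℂ B ⊆ (Set.Icc l r ×ℂ Set.Icc b t)ᶜ)
      (hAA' : (A ∩ A').Nonempty) (hBB' : (B ∩ B').Nonempty)
      (h' : Set.EqOn N (cauchyTransform Φ) (A' ×ℂ B')) :
      Set.EqOn N (cauchyTransform Φ) (A ×ℂ B) :=
    eqOn_of_convex_of_eqOn_open (convex_reProdIm hA hB) (hAo.reProdIm hBo)
      (hN.mono fun z hz ↦ ⟨hAx hz.1, hBy hz.2⟩) ((differentiableOn_cauchyTransform Φ).mono hQ)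
      (hA'.reProdIm hB') ⟨⟨hAA'.some, hBB'.some⟩, ⟨hAA'.some_mem.1, hBB'.some_mem.1⟩,
        hAA'.some_mem.2, hBB'.some_mem.2⟩ h'
  have hleft : (Set.Iio x ∩ Set.Iio l).Nonempty := by simp
  have hbelow : Set.EqOn N (cauchyTransform Φ) (Set.Iio x ×ℂ Set.Ioo y₁ b) :=
    extend (convex_Iio _) isOpen_Iio (convex_Ioo _ _) isOpen_Ioo isOpen_Iio isOpen_Ioo subset_rfl
      (Set.Ioo_subset_Ioo_right hb.2.le) (fun z hz hzQ ↦ (hz.2.2.trans_le hzQ.2.1).false) hleft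
      (by simpa [Set.Ioo_inter_Ioo] using ⟨hb.1, hb.1.trans hb.2⟩) h
  rintro z ⟨⟨hzx, hz₁, hz₂⟩, hzQ⟩
  rcases lt_or_ge z.re l with hzl | hzl
  · exact h ⟨hzl, hz₁, hz₂⟩
  rcases lt_or_ge z.im b with hzb | hzb
  · exact hbelow ⟨hzx, hz₁, hzb⟩
  rcases lt_or_ge t z.im with hzt | hzt
  · exact extend (convex_Iio _) isOpen_Iio (convex_Ioo _ _) isOpen_Ioo isOpen_Iio isOpen_Ioo
      subset_rfl (Set.Ioo_subset_Ioo_left ht) (fun w hw hwQ ↦ (hw.2.1.trans_le hwQ.2.2).false)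
      hleft ⟨z.im, ⟨hzt, hz₂⟩, hz₁, hz₂⟩ h ⟨hzx, hzt, hz₂⟩
  · have hzr : r < z.re := not_le.mp fun hzr ↦ hzQ ⟨⟨hzl, hzr⟩, hzb, hzt⟩
    exact extend (convex_Ioo r x) isOpen_Ioo (convex_Ioo _ _) isOpen_Ioo isOpen_Iio isOpen_Ioo
      Set.Ioo_subset_Iio_self subset_rfl (fun w hw hwQ ↦ (hw.1.1.trans_le hwQ.1.2).false)
      ⟨z.re, ⟨hzr, hzx⟩, hzx⟩ (by simpa [Set.Ioo_inter_Ioo] using ⟨hb.1.trans hb.2, hb.1⟩) hbelow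
      ⟨⟨hzr, hzx⟩, hz₁, hz₂⟩

theorem exists_differentiableOn_eqOn_cauchyTransform (hb : b ∈ Set.Ioo y₁ y₂)
    (ht : y₁ ≤ t)
    (hN : DifferentiableOn ℂ N (Set.Iio x ×ℂ Set.Ioo y₁ y₂))
    (h : Set.EqOn N (cauchyTransform Φ) (Set.Iio l ×ℂ Set.Ioo y₁ y₂)) :
    ∃ D, DifferentiableOn ℂ D ((Set.univ ×ℂ Set.Ioo y₁ y₂) \ (Set.Icc x r ×ℂ Set.Icc b t)) ∧
      Set.EqOn D (cauchyTransform Φ)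
        ((Set.univ ×ℂ Set.Ioo y₁ y₂) \ (Set.Icc l r ×ℂ Set.Icc b t)) := by
  have hEq := eqOn_cauchyTransform_of_eqOn_left hb ht hN h
  let D (z : ℂ) : ℂ := if z.re < x then N z else cauchyTransform Φ z
  have hDC : Set.EqOn D (cauchyTransform Φ)
      ((Set.univ ×ℂ Set.Ioo y₁ y₂) \ (Set.Icc l r ×ℂ Set.Icc b t)) := fun z hz ↦ by
    by_cases hzx : z.re < x
    · simp only [D, if_pos hzx, hEq ⟨⟨hzx, hz.1.2⟩, hz.2⟩]
    · simp only [D, if_neg hzx]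
  refine ⟨D, fun z ⟨hzS, hzQ⟩ ↦ DifferentiableAt.differentiableWithinAt ?_, hDC⟩
  by_cases hzx : z.re < x
  · have hopen : Set.Iio x ×ℂ Set.Ioo y₁ y₂ ∈ 𝓝 z :=
      (isOpen_Iio.reProdIm isOpen_Ioo).mem_nhds ⟨hzx, hzS.2⟩
    refine (hN.differentiableAt hopen).congr_of_eventuallyEq ?_
    filter_upwards [hopen] with w hw using if_pos hw.1
  · have hopen : (Set.univ ×ℂ Set.Ioo y₁ y₂) \ (Set.Icc l r ×ℂ Set.Icc b t) ∈ 𝓝 z :=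
      ((isOpen_univ.reProdIm isOpen_Ioo).sdiff (isClosed_Icc.reProdIm isClosed_Icc)).mem_nhds
        ⟨hzS, fun hz ↦ hzQ ⟨⟨not_lt.mp hzx, hz.1.2⟩, hz.2⟩⟩
    exact ((differentiableOn_cauchyTransform Φ).mono (fun w hw ↦ hw.2)
      |>.differentiableAt hopen).congr_of_eventuallyEq (hDC.eventuallyEq_of_mem hopen)

variable {a₁ a₂ l' c r' b' t' : ℝ}

lemma two_pi_I_smul_apply_restrictTo_eq_of_eqOn
    (hDC : Set.EqOn D (cauchyTransform Φ)
      ((Set.univ ×ℂ Set.Ioo y₁ y₂) \ (Set.Icc l r ×ℂ Set.Icc b t)))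
    (hf : DifferentiableOn ℂ f (Set.Ioo a₁ a₂ ×ℂ Set.Ioo y₁ y₂)) (hlr : l ≤ r) (hbt : b ≤ t)
    (hl' : l' ∈ Set.Ioo a₁ l) (hr' : r' ∈ Set.Ioo r a₂) (hb' : b' ∈ Set.Ioo y₁ b)
    (ht' : t' ∈ Set.Ioo t y₂) :
    (2 * π * I) • Φ (restrictTo _ f) = rectIntegral (fun z ↦ f z * D z) l' r' b' t' := by
  have hlr' : l' ≤ r' := hl'.2.le.trans (hlr.trans hr'.1.le)
  have hbt' : b' ≤ t' := hb'.2.le.trans (hbt.trans ht'.1.le)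
  have hframe := rectFrame_subset hlr' hbt'
  have hQ' : Set.Icc l' r' ×ℂ Set.Icc b' t' ⊆ Set.Ioo a₁ a₂ ×ℂ Set.Ioo y₁ y₂ :=
    reProdIm_subset_iff.mpr <| Set.prod_mono (Set.Icc_subset_Ioo hl'.1 hr'.2)
      (Set.Icc_subset_Ioo hb'.1 ht'.2)
  have hQ : Set.Icc l r ×ℂ Set.Icc b t ⊆ Set.Ioo l' r' ×ℂ Set.Ioo b' t' :=
    reProdIm_subset_iff.mpr <| Set.prod_mono (Set.Icc_subset_Ioo hl'.2 hr'.1)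
      (Set.Icc_subset_Ioo hb'.2 ht'.1)
  rw [two_pi_I_smul_apply_restrictTo Φ (convex_reProdIm (convex_Ioo _ _) (convex_Ioo _ _))
    (isOpen_Ioo.reProdIm isOpen_Ioo) hf (fun z hz ↦ hQ' (hframe hz).1)
    (hQ.trans fun z hz ↦ hQ' ⟨Set.Ioo_subset_Icc_self hz.1, Set.Ioo_subset_Icc_self hz.2⟩)
    hQ hlr' hbt']
  exact rectIntegral_congr fun z hz ↦ by
    simp only [hDC ⟨⟨trivial, (hQ' (hframe hz).1).2⟩, fun h ↦ (hframe hz).2 (hQ h)⟩]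

theorem apply_restrictTo_eq_zero_of_continuation (hrx : r < x) (hlr : l ≤ r) (hbt : b ≤ t)
    (hb : y₁ < b) (ht : t < y₂) (hl : a₁ < l) (hr : r < a₂)
    (hN : DifferentiableOn ℂ N (Set.Iio x ×ℂ Set.Ioo y₁ y₂))
    (h : Set.EqOn N (cauchyTransform Φ) (Set.Iio l ×ℂ Set.Ioo y₁ y₂))
    (hf : DifferentiableOn ℂ f (Set.Ioo a₁ a₂ ×ℂ Set.Ioo y₁ y₂)) : Φ (restrictTo _ f) = 0 := by
  obtain ⟨D, hD, hDC⟩ := exists_differentiableOn_eqOn_cauchyTransform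
    ⟨hb, hbt.trans_lt ht⟩ (hb.le.trans hbt) hN h
  obtain ⟨l', hl'⟩ := exists_between hl
  obtain ⟨r', hr'⟩ := exists_between hr
  obtain ⟨b', hb'⟩ := exists_between hb
  obtain ⟨t', ht'⟩ := exists_between ht
  have hcontour := two_pi_I_smul_apply_restrictTo_eq_of_eqOn hDC hf hlr hbt hl' hr' hb' ht'
  rw [rectIntegral_eq_zero_of_differentiableOn
    (convex_reProdIm (convex_Ioo a₁ a₂) (convex_Ioo y₁ y₂))] at hcontour
  · exact (smul_eq_zero.mp hcontour).resolve_left two_pi_I_ne_zero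
  · exact hf.mul (hD.mono fun z hz ↦ ⟨⟨trivial, hz.2⟩, fun hzQ ↦
      (hrx.trans_le (hzQ.1.1.trans hzQ.1.2)).false⟩)
  · exact rectFrame_subset_reProdIm (hl'.2.le.trans (hlr.trans hr'.1.le))
      (hb'.2.le.trans (hbt.trans ht'.1.le)) (Set.Icc_subset_Ioo hl'.1 hr'.2)
      (Set.Icc_subset_Ioo hb'.1 ht'.2)

theorem exists_apply_restrictTo_eq_of_continuation (hc : c ∈ Set.Ico l x) (hcr' : c ≤ r')
    (hlr : l ≤ r) (hbt : b ≤ t) (hl : a₁ < l) (hr' : r' ∈ Set.Ioo r a₂)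
    (hb' : b' ∈ Set.Ioo y₁ b) (ht' : t' ∈ Set.Ioo t y₂)
    (hN : DifferentiableOn ℂ N (Set.Iio x ×ℂ Set.Ioo y₁ y₂))
    (h : Set.EqOn N (cauchyTransform Φ) (Set.Iio l ×ℂ Set.Ioo y₁ y₂)) :
    ∃ Φ' : StrongDual ℂ C((Set.Icc c r' ×ℂ Set.Icc b' t' : Set ℂ), ℂ),
      ∀ f, DifferentiableOn ℂ f (Set.Ioo a₁ a₂ ×ℂ Set.Ioo y₁ y₂) →
        Φ' (restrictTo _ f) = Φ (restrictTo _ f) := by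
  obtain ⟨D, hD, hDC⟩ := exists_differentiableOn_eqOn_cauchyTransform
    ⟨hb'.1.trans hb'.2, hbt.trans_lt (ht'.1.trans ht'.2)⟩ ((hb'.1.trans hb'.2).le.trans hbt) hN h
  obtain ⟨l', hl'⟩ := exists_between hl
  have hbt' : b' ≤ t' := hb'.2.le.trans (hbt.trans ht'.1.le)
  have hy : Set.Icc b' t' ⊆ Set.Ioo y₁ y₂ := Set.Icc_subset_Ioo hb'.1 ht'.2
  have hl'c : l' ≤ c := hl'.2.le.trans hc.1
  have hcontinuous {l₁ : ℝ} (hl₁ : l₁ < x) (hl₁r : l₁ ≤ r') :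
      ContinuousOn D (rectFrame l₁ r' b' t') := hD.continuousOn.mono fun z hz ↦
    ⟨rectFrame_subset_reProdIm hl₁r hbt' (Set.subset_univ _) hy hz, fun hzQ ↦
      (rectFrame_subset hl₁r hbt' hz).2 ⟨⟨hl₁.trans_le hzQ.1.1, hzQ.1.2.trans_lt hr'.1⟩,
        hb'.2.trans_le hzQ.2.1, hzQ.2.2.trans_lt ht'.1⟩⟩
  obtain ⟨Φ', hΦ'⟩ := exists_apply_restrictTo_eq_rectIntegral
    (fun z hz ↦ (rectFrame_subset hcr' hbt' hz).1)
    ((hcontinuous hc.2 hcr').const_smul (2 * π * I : ℂ)⁻¹)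
  refine ⟨Φ', fun f hf ↦ ?_⟩
  have hfQ {l₁ : ℝ} (hl₁ : a₁ < l₁) : Set.Icc l₁ r' ×ℂ Set.Icc b' t' ⊆
      Set.Ioo a₁ a₂ ×ℂ Set.Ioo y₁ y₂ := fun z hz ↦
    ⟨Set.Icc_subset_Ioo hl₁ hr'.2 hz.1, hy hz.2⟩
  have hleft : rectIntegral (fun z ↦ f z * D z) l' c b' t' = 0 :=
    rectIntegral_eq_zero_of_differentiableOn
      (convex_reProdIm (convex_Ioo a₁ (min x a₂)) (convex_Ioo y₁ y₂))
      ((hf.mono fun z hz ↦ ⟨⟨hz.1.1, hz.1.2.trans_le (min_le_right _ _)⟩, hz.2⟩).mul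
        (hD.mono fun z hz ↦ ⟨⟨trivial, hz.2⟩, fun hzQ ↦
          ((hz.1.2.trans_le (min_le_left _ _)).trans_le hzQ.1.1).false⟩))
      (rectFrame_subset_reProdIm hl'c hbt'
        (Set.Icc_subset_Ioo hl'.1 (lt_min hc.2 (hcr'.trans_lt hr'.2))) hy)
  rw [hΦ' f (hf.continuousOn.mono (hfQ (hl.trans_le hc.1))), ← inv_smul_smul₀ two_pi_I_ne_zero
      (Φ _), two_pi_I_smul_apply_restrictTo_eq_of_eqOn hDC hf hlr hbt hl' hr' hb' ht',
    ← rectIntegral_add_rectIntegral hl'c hcr', hleft, zero_add, ← rectIntegral_const_smul]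
  · exact rectIntegral_congr fun z _ ↦ by simp only [Pi.smul_apply, smul_eq_mul, mul_left_comm]
  · exact (hf.continuousOn.mono fun z hz ↦ hfQ hl'.1 (rectFrame_subset (hl'c.trans hcr') hbt' hz).1)
      |>.mul (hcontinuous (hl'c.trans_lt hc.2) (hl'c.trans hcr'))

end AnalyticContinuation

section Zeta

open ArithmeticFunction (vonMangoldt vonMangoldt_apply_pow vonMangoldt_apply_prime
  vonMangoldt_eq_zero_iff vonMangoldt_nonneg)

lemma injective_primes_pow_add_two :
    Function.Injective fun pk : Nat.Primes × ℕ ↦ (pk.1 : ℕ) ^ (pk.2 + 2) := fun x y h ↦ by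
  have hinj := Nat.Primes.prodNatEquiv.injective (a₁ := (x.1, x.2 + 1)) (a₂ := (y.1, y.2 + 1))
    (Subtype.ext h)
  simpa [Prod.ext_iff] using hinj

lemma vonMangoldt_eq_zero_of_not_prime_of_notMem_range {n : ℕ} (hn : ¬ n.Prime)
    (h : n ∉ Set.range fun pk : Nat.Primes × ℕ ↦ (pk.1 : ℕ) ^ (pk.2 + 2)) :
    vonMangoldt n = 0 := by
  refine vonMangoldt_eq_zero_iff.mpr fun hpow ↦ ?_
  obtain ⟨p, k, hp, hk, rfl⟩ := (isPrimePow_nat_iff n).mp hpow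
  have hk1 : k ≠ 1 := fun hk1 ↦ hn (by simpa [hk1] using hp)
  exact h ⟨(⟨p, hp⟩, k - 2), by simp only [Nat.sub_add_cancel (by lia : 2 ≤ k)]⟩

lemma log_mul_rpow_pow_add_two_le {p x δ : ℝ} (hp : 2 ≤ p) (hx : 0 ≤ x) (hδ : 0 < δ) (k : ℕ) :
    Real.log p * (p ^ (k + 2)) ^ (-x) ≤ p ^ (δ - 2 * x) / δ * ((2 : ℝ) ^ (-x)) ^ k := by
  have hp0 : 0 < p := by linarith
  calc Real.log p * (p ^ (k + 2)) ^ (-x)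
      = Real.log p * (p ^ (-(2 * x)) * (p ^ (-x)) ^ k) := by
        rw [← Real.rpow_natCast, ← Real.rpow_natCast, ← Real.rpow_mul hp0.le,
          ← Real.rpow_mul hp0.le, ← Real.rpow_add hp0]
        congr 2; push_cast; ring
    _ ≤ p ^ δ / δ * (p ^ (-(2 * x)) * ((2 : ℝ) ^ (-x)) ^ k) := by
        have hlog := Real.log_le_rpow_div hp0.le hδ
        have hpow := Real.rpow_le_rpow_of_nonpos two_pos hp (neg_nonpos.mpr hx)
        gcongr
    _ = p ^ (δ - 2 * x) / δ * ((2 : ℝ) ^ (-x)) ^ k := by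
        rw [sub_eq_add_neg, Real.rpow_add hp0]; ring

lemma summable_vonMangoldt_mul_rpow_of_not_prime {x : ℝ} (hx : 1 / 2 < x) :
    Summable fun n : ℕ ↦ if n.Prime then 0 else vonMangoldt n * (n : ℝ) ^ (-x) := by
  obtain ⟨δ, hδ, hδx⟩ := exists_between (show 0 < 2 * x - 1 by linarith)
  refine (injective_primes_pow_add_two.summable_iff fun n hn ↦ ?_).mp ?_
  · exact ite_eq_left_iff.mpr fun hp ↦ by
      rw [vonMangoldt_eq_zero_of_not_prime_of_notMem_range hp hn, zero_mul]
  have hprimes : Summable fun p : Nat.Primes ↦ (p : ℝ) ^ (δ - 2 * x) / δ :=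
    (Nat.Primes.summable_rpow.mpr (by linarith)).div_const δ
  have hgeom : Summable fun k : ℕ ↦ ((2 : ℝ) ^ (-x)) ^ k :=
    summable_geometric_of_lt_one (by positivity)
      (Real.rpow_lt_one_of_one_lt_of_neg one_lt_two (by linarith))
  have hterm (p : Nat.Primes) (k : ℕ) : vonMangoldt ((p : ℕ) ^ (k + 2)) = Real.log p := by
    rw [vonMangoldt_apply_pow (by lia), vonMangoldt_apply_prime p.2]
  refine (hprimes.mul_of_nonneg hgeom (fun p ↦ by positivity) fun k ↦ by positivity).of_nonneg_of_le
    (fun ⟨p, k⟩ ↦ ?_) fun ⟨p, k⟩ ↦ ?_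
  all_goals
    simp only [Function.comp_apply, if_neg (Nat.Prime.not_prime_pow (by lia : 2 ≤ k + 2)), hterm]
  · exact mul_nonneg (Real.log_nonneg (by exact_mod_cast p.2.one_le)) (by positivity)
  · push_cast
    exact log_mul_rpow_pow_add_two_le (by exact_mod_cast p.2.two_le) (by linarith) hδ k

lemma riemannZeta₁_ne_zero_of_one_le_re {s : ℂ} (hs : 1 ≤ s.re) : riemannZeta₁ s ≠ 0 := by
  rcases eq_or_ne s 1 with rfl | h
  · simp
  · exact fun h0 ↦ riemannZeta_ne_zero_of_one_le_re hs (by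
      rw [riemannZeta_eq_inv_sub_mul h, h0, mul_zero])

lemma exists_riemannZeta₁_ne_zero_of_lt_re (B : ℝ) :
    ∃ δ > 0, ∀ s : ℂ, 1 - δ < s.re → |s.im| ≤ B → riemannZeta₁ s ≠ 0 := by
  let Z : Set ℂ := (Set.Icc 0 1 ×ℂ Set.Icc (-B) B) ∩ riemannZeta₁ ⁻¹' {0}
  have hZ : IsCompact Z := (isCompact_Icc.reProdIm isCompact_Icc).inter_right
    (isClosed_singleton.preimage differentiable_riemannZeta₁.continuous)
  obtain ⟨δ, hδ, hZδ⟩ : ∃ δ ∈ Set.Ioc (0 : ℝ) 1, ∀ s ∈ Z, s.re ≤ 1 - δ := by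
    rcases Z.eq_empty_or_nonempty with hempty | hne
    · exact ⟨1, by simp, by simp [hempty]⟩
    obtain ⟨s₀, hs₀, hmax⟩ := hZ.exists_isMaxOn hne continuous_re.continuousOn
    have hs₀1 : s₀.re < 1 := not_le.mp fun h ↦ riemannZeta₁_ne_zero_of_one_le_re h hs₀.2
    exact ⟨1 - s₀.re, ⟨by linarith, by linarith [hs₀.1.1.1]⟩, fun s hs ↦ by simpa using hmax hs⟩
  refine ⟨δ, hδ.1, fun s hre him h0 ↦ ?_⟩
  have hre1 : s.re < 1 := not_le.mp fun h ↦ riemannZeta₁_ne_zero_of_one_le_re h h0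
  exact hre.not_ge (hZδ s ⟨⟨⟨by linarith [hδ.2], hre1.le⟩, abs_le.mp him⟩, h0⟩)

/-- The regular part of `-ζ'/ζ` at its pole `1`. -/
noncomputable def negLogDerivZetaRegular (s : ℂ) : ℂ := -deriv riemannZeta₁ s / riemannZeta₁ s

lemma differentiableAt_negLogDerivZetaRegular {s : ℂ} (hs : riemannZeta₁ s ≠ 0) :
    DifferentiableAt ℂ negLogDerivZetaRegular s :=
  (differentiable_riemannZeta₁.analyticAt s).deriv.differentiableAt.neg.div
    (differentiable_riemannZeta₁ s) hs

lemma LSeries_vonMangoldt_eq_inv_sub_one_add {s : ℂ} (hs : 1 < s.re) :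
    LSeries (fun n ↦ (vonMangoldt n : ℂ)) s = (s - 1)⁻¹ + negLogDerivZetaRegular s := by
  have hs1 : s ≠ 1 := by rintro rfl; simp at hs
  have hderiv : deriv riemannZeta s =
      -((s - 1) ^ 2)⁻¹ * riemannZeta₁ s + (s - 1)⁻¹ * deriv riemannZeta₁ s := by
    have hEq : riemannZeta =ᶠ[𝓝 s] fun z ↦ (z - 1)⁻¹ * riemannZeta₁ z := by
      filter_upwards [isOpen_ne.mem_nhds hs1] with z hz using riemannZeta_eq_inv_sub_mul hz
    have hinv : HasDerivAt (fun z ↦ (z - 1)⁻¹) (-((s - 1) ^ 2)⁻¹) s := by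
      simpa only [neg_div, one_div] using
        ((hasDerivAt_id' s).sub_const 1).fun_inv (sub_ne_zero.mpr hs1)
    rw [hEq.deriv_eq, (hinv.fun_mul (differentiable_riemannZeta₁ s).hasDerivAt).deriv]
  have h0 := riemannZeta₁_ne_zero_of_one_le_re hs.le
  have hs1' := sub_ne_zero.mpr hs1
  rw [ArithmeticFunction.LSeries_vonMangoldt_eq_deriv_riemannZeta_div hs, hderiv,
    riemannZeta_eq_inv_sub_mul hs1, negLogDerivZetaRegular]
  field_simp
  ring

end Zeta

section Annihilation

open ArithmeticFunction (vonMangoldt vonMangoldt_apply_prime)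

lemma log_pow_le_mul_rpow {x y : ℝ} (hx : 0 < x) (hy : 1 ≤ y) {k : ℕ} (hk : k ≠ 0) :
    Real.log y ^ k ≤ (k / x) ^ k * y ^ x := by
  have hk0 : (0 : ℝ) < k := by positivity
  calc Real.log y ^ k ≤ (y ^ (x / k) / (x / k)) ^ k :=
        pow_le_pow_left₀ (Real.log_nonneg hy)
          (Real.log_le_rpow_div (by linarith) (by positivity)) k
    _ = (k / x) ^ k * y ^ x := by
        rw [div_pow, ← Real.rpow_natCast (y ^ _), ← Real.rpow_mul (by linarith),
          div_mul_cancel₀ _ hk0.ne', div_eq_mul_inv, ← inv_pow, inv_div, mul_comm]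

lemma differentiable_natCast_cpow_neg {n : ℕ} (hn : n ≠ 0) :
    Differentiable ℂ fun s : ℂ ↦ (n : ℂ) ^ (-s) :=
  differentiable_neg.const_cpow (.inl (Nat.cast_ne_zero.mpr hn))

lemma norm_natCast_cpow_neg_le {n : ℕ} (hn : n ≠ 0) {s : ℂ} {σ : ℝ} (hs : σ ≤ s.re) :
    ‖(n : ℂ) ^ (-s)‖ ≤ (n : ℝ) ^ (-σ) := by
  rw [norm_natCast_cpow_of_pos (Nat.pos_of_ne_zero hn), neg_re]
  exact Real.rpow_le_rpow_of_exponent_le (by exact_mod_cast Nat.one_le_iff_ne_zero.mpr hn)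
    (neg_le_neg hs)

variable {Q : Set ℂ}

lemma restrictTo_natCast_cpow_neg_apply {n : ℕ} (hn : n ≠ 0) (s : Q) :
    restrictTo Q (fun s ↦ (n : ℂ) ^ (-s)) s = (n : ℂ) ^ (-s : ℂ) :=
  restrictTo_apply (differentiable_natCast_cpow_neg hn).continuous.continuousOn s

variable [CompactSpace Q] {l : ℝ}

lemma norm_restrictTo_natCast_cpow_neg_le (hQ : ∀ s ∈ Q, l ≤ s.re) {n : ℕ} (hn : n ≠ 0) :
    ‖restrictTo Q fun s ↦ (n : ℂ) ^ (-s)‖ ≤ (n : ℝ) ^ (-l) := by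
  refine (ContinuousMap.norm_le _ (by positivity)).mpr fun s ↦ ?_
  rw [restrictTo_natCast_cpow_neg_apply hn]
  exact norm_natCast_cpow_neg_le hn (hQ s s.2)

variable (Φ : StrongDual ℂ C(Q, ℂ))

/-- The coefficients `Λ(n) Φ(n⁻ˢ)` of the Dirichlet series into which a functional turns the
logarithmic derivative of the zeta function. -/
noncomputable def vonMangoldtCoeff (n : ℕ) : ℂ :=
  vonMangoldt n * Φ (restrictTo Q fun s ↦ (n : ℂ) ^ (-s))

lemma LSeriesSummable_vonMangoldtCoeff (hQ : ∀ s ∈ Q, l ≤ s.re) (hl : 1 / 2 < l) {m : ℕ}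
    (hΦ : Summable fun n : ℕ ↦
      if n.Prime then ‖Φ (restrictTo Q fun s ↦ (n : ℂ) ^ (-s))‖ / Real.log n ^ m else 0)
    {w : ℂ} (hw : 0 < w.re) : LSeriesSummable (vonMangoldtCoeff Φ) w := by
  refine ((hΦ.mul_left (((m + 1 : ℕ) / w.re) ^ (m + 1))).add
    ((summable_vonMangoldt_mul_rpow_of_not_prime hl).mul_left ‖Φ‖)).of_norm_bounded fun n ↦ ?_
  rcases eq_or_ne n 0 with rfl | hn
  · simp [Nat.not_prime_zero]
  have hn1 : (1 : ℝ) ≤ n := by exact_mod_cast Nat.one_le_iff_ne_zero.mpr hn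
  rw [LSeries.norm_term_eq, if_neg hn, vonMangoldtCoeff, norm_mul, norm_real,
    Real.norm_of_nonneg ArithmeticFunction.vonMangoldt_nonneg]
  by_cases hp : n.Prime
  · have hlog : 0 < Real.log n := Real.log_pos (by exact_mod_cast hp.one_lt)
    rw [if_pos hp, if_pos hp, mul_zero, add_zero, vonMangoldt_apply_prime hp,
      div_le_iff₀ (by positivity)]
    calc Real.log n * ‖Φ (restrictTo Q fun s ↦ (n : ℂ) ^ (-s))‖
        = ‖Φ (restrictTo Q fun s ↦ (n : ℂ) ^ (-s))‖ / Real.log n ^ m * Real.log n ^ (m + 1) := by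
          field_simp
          ring
      _ ≤ ‖Φ (restrictTo Q fun s ↦ (n : ℂ) ^ (-s))‖ / Real.log n ^ m *
            (((m + 1 : ℕ) / w.re) ^ (m + 1) * (n : ℝ) ^ w.re) := by
          gcongr
          exact log_pow_le_mul_rpow hw hn1 m.succ_ne_zero
      _ = _ := by ring
  · rw [if_neg hp, if_neg hp, mul_zero, zero_add]
    refine (div_le_self (by positivity) (Real.one_le_rpow hn1 hw.le)).trans ?_
    rw [mul_left_comm]
    gcongr
    exact (Φ.le_opNorm _).trans (by gcongr; exact norm_restrictTo_natCast_cpow_neg_le hQ hn)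

/-- The expression for the Cauchy transform of `Φ` to the left of `Q` that the Dirichlet series of
`-ζ'/ζ` provides. -/
noncomputable def zetaContinuation (z : ℂ) : ℂ :=
  Φ (restrictTo Q fun s ↦ negLogDerivZetaRegular (s + (1 - z))) -
    LSeries (vonMangoldtCoeff Φ) (1 - z)

variable {Φ}

lemma summable_term_vonMangoldt_smul_restrictTo (hQ : ∀ s ∈ Q, l ≤ s.re) {z : ℂ}
    (hz : z.re < l) :
    Summable fun n ↦ LSeries.term (fun n ↦ (vonMangoldt n : ℂ)) (1 - z) n •
      restrictTo Q fun s ↦ (n : ℂ) ^ (-s) := by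
  refine (ArithmeticFunction.LSeriesSummable_vonMangoldt (s := l + 1 - z)
    (by simp; linarith)).norm.of_norm_bounded fun n ↦ ?_
  rcases eq_or_ne n 0 with rfl | hn
  · simp
  · have hn0 : (0 : ℝ) < n := by positivity
    rw [norm_smul, LSeries.norm_term_eq, LSeries.norm_term_eq, if_neg hn, if_neg hn]
    refine (mul_le_mul_of_nonneg_left (norm_restrictTo_natCast_cpow_neg_le hQ hn)
      (by positivity)).trans_eq ?_
    rw [show (l + 1 - z : ℂ).re = (1 - z).re + l by simp; ring, Real.rpow_add hn0,
      Real.rpow_neg hn0.le, div_mul_eq_div_div, div_eq_mul_inv (_ / _)]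

lemma term_mul_natCast_cpow_neg (f : ℕ → ℂ) (w s : ℂ) (n : ℕ) :
    LSeries.term f w n * (n : ℂ) ^ (-s) = LSeries.term f (s + w) n := by
  rcases eq_or_ne n 0 with rfl | hn
  · simp
  · rw [LSeries.term_of_ne_zero hn, LSeries.term_of_ne_zero hn,
      cpow_add _ _ (Nat.cast_ne_zero.mpr hn), cpow_neg]
    field_simp

lemma zetaContinuation_eq_cauchyTransform (hQ : ∀ s ∈ Q, l ≤ s.re) {z : ℂ} (hz : z.re < l) :
    zetaContinuation Φ z = cauchyTransform Φ z := by
  have hre {s : ℂ} (hs : s ∈ Q) : 1 < (s + (1 - z)).re := by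
    have := hQ s hs
    simp only [sub_re, add_re, one_re]
    linarith
  let G : C(Q, ℂ) := ∑' n, LSeries.term (fun n ↦ (vonMangoldt n : ℂ)) (1 - z) n •
      restrictTo Q fun s ↦ (n : ℂ) ^ (-s)
  have hG := (summable_term_vonMangoldt_smul_restrictTo hQ hz).hasSum
  have hΦG : Φ G = LSeries (vonMangoldtCoeff Φ) (1 - z) := by
    refine (hG.mapL Φ).tsum_eq.symm.trans (tsum_congr fun n ↦ ?_)
    rw [map_smul, smul_eq_mul, LSeries.term_def, LSeries.term_def]
    split_ifs
    · exact zero_mul _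
    · exact div_mul_eq_mul_div _ _ _
  have hGs (s : Q) : G s = (s - z : ℂ)⁻¹ + negLogDerivZetaRegular (s + (1 - z)) := by
    rw [show (s - z : ℂ) = s + (1 - z) - 1 by ring,
      ← LSeries_vonMangoldt_eq_inv_sub_one_add (hre s.2)]
    refine (ContinuousMap.hasSum_apply hG s).tsum_eq.symm.trans (tsum_congr fun n ↦ ?_)
    rw [← term_mul_natCast_cpow_neg, ContinuousMap.smul_apply, smul_eq_mul]
    rcases eq_or_ne n 0 with rfl | hn
    · simp
    · rw [restrictTo_natCast_cpow_neg_apply hn]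
  have hreg : ContinuousOn (fun s ↦ negLogDerivZetaRegular (s + (1 - z))) Q := fun s hs ↦
    ((differentiableAt_negLogDerivZetaRegular (riemannZeta₁_ne_zero_of_one_le_re
      (hre hs).le)).continuousAt.comp (f := (· + (1 - z))) (by fun_prop)).continuousWithinAt
  have hinv : ContinuousOn (fun s ↦ (z - s)⁻¹) Q :=
    (by fun_prop : ContinuousOn (fun s ↦ z - s) Q).inv₀ fun s hs h ↦ by
      rw [sub_eq_zero.mp h] at hz
      exact hz.not_ge (hQ s hs)
  rw [zetaContinuation, ← hΦG, ← map_sub, cauchyTransform]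
  congr 1
  ext s
  rw [ContinuousMap.sub_apply, hGs, restrictTo_apply hreg, restrictTo_apply hinv,
    ← neg_sub (s : ℂ) z, inv_neg]
  ring

lemma differentiableOn_zetaContinuation {δ y₁ y₂ : ℝ} (hQ : ∀ s ∈ Q, l ≤ s.re) (hl : 1 / 2 < l)
    (hQy : ∀ s ∈ Q, s.im ∈ Set.Ioo y₁ y₂) (hδl : l + δ ≤ 1)
    (hδ : ∀ s : ℂ, 1 - δ < s.re → |s.im| ≤ y₂ - y₁ → riemannZeta₁ s ≠ 0) {m : ℕ}
    (hΦ : Summable fun n : ℕ ↦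
      if n.Prime then ‖Φ (restrictTo Q fun s ↦ (n : ℂ) ^ (-s))‖ / Real.log n ^ m else 0) :
    DifferentiableOn ℂ (zetaContinuation Φ) (Set.Iio (l + δ) ×ℂ Set.Ioo y₁ y₂) := by
  have hζ {z s : ℂ} (hz : z ∈ Set.Iio (l + δ) ×ℂ Set.Ioo y₁ y₂) (hs : s ∈ Q) :
      riemannZeta₁ (s + (1 - z)) ≠ 0 := by
    obtain ⟨hzr, hz₁, hz₂⟩ := hz
    obtain ⟨hs₁, hs₂⟩ := hQy s hs
    have hsr := hQ s hs
    have hzr' : z.re < l + δ := hzr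
    refine hδ _ ?_ (abs_le.mpr ?_)
    · simp only [sub_re, add_re, one_re]
      linarith
    · simp only [sub_im, add_im, one_im]
      constructor <;> linarith
  have habs : LSeries.abscissaOfAbsConv (vonMangoldtCoeff Φ) ≤ (0 : ℝ) :=
    LSeries.abscissaOfAbsConv_le_of_forall_lt_LSeriesSummable fun x hx ↦
      LSeriesSummable_vonMangoldtCoeff Φ hQ hl hΦ (by simpa using hx)
  refine .sub (differentiableOn_apply_restrictTo Φ (isOpen_Iio.reProdIm isOpen_Ioo) ?_ ?_) ?_
  · rintro ⟨z, s⟩ ⟨hz, hs⟩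
    exact ((differentiableAt_negLogDerivZetaRegular (hζ hz hs)).continuousAt.comp
      (f := fun q : ℂ × ℂ ↦ q.2 + (1 - q.1)) (by fun_prop)).continuousWithinAt
  · intro s hs z hz
    exact ((differentiableAt_negLogDerivZetaRegular (hζ hz hs)).comp z
      (f := fun z ↦ s + (1 - z)) (by fun_prop)).differentiableWithinAt
  · refine (LSeries_differentiableOn _).comp (by fun_prop) fun z hz ↦ habs.trans_lt ?_
    have hzr : z.re < l + δ := hz.1
    simp only [sub_re, one_re, EReal.coe_lt_coe_iff]
    linarith

theorem apply_restrictTo_eq_zero_of_summable {a₁ a₂ y₁ y₂ : ℝ} (ha₁ : 1 / 2 ≤ a₁) (ha₂ : a₂ < 1)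
    {l r b t : ℝ} (hl : a₁ < l) (hlr : l ≤ r) (hr : r < a₂) (hb : y₁ < b) (hbt : b ≤ t)
    (ht : t < y₂) (Φ : StrongDual ℂ C((Set.Icc l r ×ℂ Set.Icc b t : Set ℂ), ℂ)) {m : ℕ}
    (hΦ : Summable fun n : ℕ ↦
      if n.Prime then ‖Φ (restrictTo _ fun s ↦ (n : ℂ) ^ (-s))‖ / Real.log n ^ m else 0)
    {f : ℂ → ℂ} (hf : DifferentiableOn ℂ f (Set.Ioo a₁ a₂ ×ℂ Set.Ioo y₁ y₂)) :
    Φ (restrictTo _ f) = 0 := by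
  obtain ⟨δ₀, hδ₀, hζ⟩ := exists_riemannZeta₁_ne_zero_of_lt_re (y₂ - y₁)
  obtain ⟨δ, hδ, hδδ₀, hδa₂⟩ : ∃ δ > 0, δ ≤ δ₀ ∧ δ ≤ 1 - a₂ :=
    ⟨min δ₀ (1 - a₂), lt_min hδ₀ (by linarith), min_le_left .., min_le_right ..⟩
  obtain ⟨n, hn⟩ := exists_nat_gt ((r - l) / (δ / 4))
  rw [div_lt_iff₀ (by positivity)] at hn
  -- The values of `Φ` on holomorphic functions persist on a rectangle narrower by `δ / 4`.
  induction n generalizing l r b t with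
  | zero => linarith [Nat.cast_zero (R := ℝ)]
  | succ n ih =>
    have hN := differentiableOn_zetaContinuation (Q := Set.Icc l r ×ℂ Set.Icc b t) (δ := δ)
      (fun s hs ↦ hs.1.1) (by linarith) (fun s hs ↦ ⟨hb.trans_le hs.2.1, hs.2.2.trans_lt ht⟩)
      (by linarith) (fun s hs ↦ hζ s (by linarith)) hΦ
    have hNC : Set.EqOn (zetaContinuation Φ) (cauchyTransform Φ)
        (Set.Iio l ×ℂ Set.Ioo y₁ y₂) := fun z hz ↦
      zetaContinuation_eq_cauchyTransform (fun s hs ↦ hs.1.1) hz.1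
    rcases lt_or_ge r (l + δ) with hrδ | hrδ
    · exact apply_restrictTo_eq_zero_of_continuation hrδ hlr hbt hb ht hl hr hN hNC hf
    obtain ⟨r', ⟨hrr', hr'a₂⟩, hr'δ⟩ : ∃ r' ∈ Set.Ioo r a₂, r' ≤ r + δ / 4 :=
      ⟨min ((r + a₂) / 2) (r + δ / 4), ⟨lt_min (by linarith) (by linarith),
        min_lt_of_left_lt (by linarith)⟩, min_le_right ..⟩
    obtain ⟨b', hb'⟩ := exists_between hb
    obtain ⟨t', ht'⟩ := exists_between ht
    obtain ⟨Φ', hΦ'⟩ := exists_apply_restrictTo_eq_of_continuation (c := l + δ / 2)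
      ⟨by linarith, by linarith⟩ (by linarith) hlr hbt hl ⟨hrr', hr'a₂⟩ hb' ht' hN hNC
    rw [← hΦ' f hf]
    refine ih (by linarith) (by linarith) hr'a₂ hb'.1 (by linarith [hb'.2, ht'.1]) ht'.2 Φ'
      (hΦ.congr fun p ↦ ?_) (by push_cast at hn; linarith)
    split_ifs with hp
    · rw [hΦ' _ (differentiable_natCast_cpow_neg hp.ne_zero).differentiableOn]
    · rfl

end Annihilation

section AreaMeanValue

open MeasureTheory Metric

variable {E : Type*} [NormedAddCommGroup E] [NormedSpace ℂ E] [CompleteSpace E]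

lemma integral_circleMap_eq_of_diffContOnCl {f : ℂ → E} {c : ℂ} {ρ r : ℝ}
    (hf : DiffContOnCl ℂ f (ball c ρ)) (hr : r ∈ Set.Ioo 0 ρ) :
    ∫ θ in Set.Ioo (-π) π, f (circleMap c r θ) = (2 * π) • f c := by
  have hmean : Real.circleAverage f c r = f c := by
    apply DiffContOnCl.circleAverage
    rw [abs_of_pos hr.1]
    exact hf.mono (ball_subset_ball hr.2.le)
  rw [← integral_Ioc_eq_integral_Ioo, ← intervalIntegral.integral_of_le (by linarith [Real.pi_pos]),
    ← hmean, Real.circleAverage_def, smul_inv_smul₀ (by positivity)]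
  have := (periodic_circleMap c r).comp f |>.intervalIntegral_add_eq (-π) 0
  simpa [two_mul] using this

lemma integral_ball_eq_of_diffContOnCl {f : ℂ → E} {c : ℂ} {ρ : ℝ} (hρ : 0 ≤ ρ)
    (hf : DiffContOnCl ℂ f (ball c ρ)) : ∫ z in ball c ρ, f z = (π * ρ ^ 2) • f c := by
  have hdist (r θ : ℝ) : dist (circleMap c r θ) c = |r| := circleMap_mem_sphere' c r θ
  have hint : IntegrableOn (fun p : ℝ × ℝ ↦ p.1 • f (circleMap c p.1 p.2))
      (Set.Ioo 0 ρ ×ˢ Set.Ioo (-π) π) := by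
    refine (ContinuousOn.integrableOn_compact (isCompact_Icc.prod isCompact_Icc) ?_).mono_set
      (Set.prod_mono Set.Ioo_subset_Icc_self Set.Ioo_subset_Icc_self)
    refine continuousOn_fst.smul (hf.continuousOn_ball.comp
      (f := fun p : ℝ × ℝ ↦ circleMap c p.1 p.2) (by unfold circleMap; fun_prop) fun p hp ↦ ?_)
    rw [mem_closedBall, hdist, abs_of_nonneg hp.1.1]
    exact hp.1.2
  calc ∫ z in ball c ρ, f z = ∫ z, (ball c ρ).indicator f (c + z) := by
        rw [integral_add_left_eq_self, integral_indicator measurableSet_ball]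
    _ = ∫ p in Set.Ioi 0 ×ˢ Set.Ioo (-π) π, p.1 • (ball c ρ).indicator f (circleMap c p.1 p.2) := by
        rw [← Complex.integral_comp_polarCoord_symm]
        simp only [Complex.polarCoord_symm_apply, circleMap, exp_mul_I, ofReal_cos, ofReal_sin]
        rfl
    _ = ∫ p in Set.Ioo 0 ρ ×ˢ Set.Ioo (-π) π, p.1 • f (circleMap c p.1 p.2) := by
        rw [setIntegral_eq_of_subset_of_forall_sdiff_eq_zero
          (measurableSet_Ioi.prod measurableSet_Ioo)
          (Set.prod_mono Set.Ioo_subset_Ioi_self subset_rfl)]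
        · refine setIntegral_congr_fun (measurableSet_Ioo.prod measurableSet_Ioo) fun p hp ↦ ?_
          have hmem : circleMap c p.1 p.2 ∈ ball c ρ := by
            rw [mem_ball, hdist, abs_of_pos hp.1.1]
            exact hp.1.2
          simp only [Set.indicator_of_mem hmem]
        · rintro p ⟨hp, hpρ⟩
          have hnotMem : circleMap c p.1 p.2 ∉ ball c ρ := by
            rw [mem_ball, hdist, abs_of_pos hp.1]
            exact fun h ↦ hpρ ⟨⟨hp.1, h⟩, hp.2⟩
          rw [Set.indicator_of_notMem hnotMem, smul_zero]
    _ = ∫ r in Set.Ioo 0 ρ, ∫ θ in Set.Ioo (-π) π, r • f (circleMap c r θ) :=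
        setIntegral_prod _ hint
    _ = ∫ r in Set.Ioo 0 ρ, r • (2 * π) • f c :=
        setIntegral_congr_fun measurableSet_Ioo fun r hr ↦ by
          rw [integral_smul, integral_circleMap_eq_of_diffContOnCl hf hr]
    _ = (π * ρ ^ 2) • f c := by
        rw [integral_smul_const, smul_smul, ← integral_Ioc_eq_integral_Ioo,
          ← intervalIntegral.integral_of_le hρ, integral_id]
        congr 1
        ring

lemma pi_mul_sq_mul_norm_sq_le_integral_ball {f : ℂ → ℂ} {c : ℂ} {ρ : ℝ} (hρ : 0 ≤ ρ)
    (hf : DiffContOnCl ℂ f (ball c ρ)) :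
    π * ρ ^ 2 * ‖f c‖ ^ 2 ≤ ∫ z in ball c ρ, ‖f z‖ ^ 2 := by
  have hsq : DiffContOnCl ℂ (f • f) (ball c ρ) := hf.smul hf
  calc π * ρ ^ 2 * ‖f c‖ ^ 2 = ‖∫ z in ball c ρ, (f • f) z‖ := by
        rw [integral_ball_eq_of_diffContOnCl hρ hsq, norm_smul, Real.norm_of_nonneg (by positivity),
          Pi.smul_apply', norm_smul, sq ‖f c‖]
    _ ≤ ∫ z in ball c ρ, ‖(f • f) z‖ := norm_integral_le_integral_norm _
    _ = ∫ z in ball c ρ, ‖f z‖ ^ 2 := by simp only [Pi.smul_apply', norm_smul, sq]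

instance isFiniteMeasure_comap_coe {Q : Set ℂ} [CompactSpace Q] :
    IsFiniteMeasure (volume.comap ((↑) : Q → ℂ)) where
  measure_univ_lt_top := by
    have hQ : IsCompact Q := isCompact_iff_compactSpace.mpr ‹_›
    rw [comap_subtype_coe_apply hQ.measurableSet, Subtype.coe_image_univ]
    exact hQ.measure_lt_top

/-- The class in `L²(Q)` of a function continuous on the compact set `Q`. -/
noncomputable def restrictToL2 (Q : Set ℂ) [CompactSpace Q] (f : ℂ → ℂ) :
    Lp ℂ 2 (volume.comap ((↑) : Q → ℂ)) :=
  ContinuousMap.toLp 2 _ ℂ (restrictTo Q f)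

lemma norm_restrictToL2_sq {Q : Set ℂ} [CompactSpace Q] {f : ℂ → ℂ} (hf : ContinuousOn f Q) :
    ‖restrictToL2 Q f‖ ^ 2 = ∫ s in Q, ‖f s‖ ^ 2 := by
  have hQ : IsCompact Q := isCompact_iff_compactSpace.mpr ‹_›
  rw [← integral_subtype_comap hQ.measurableSet fun s ↦ ‖f s‖ ^ 2, ← ofReal_inj, ofReal_pow]
  refine (inner_self_eq_norm_sq_to_K (𝕜 := ℂ) _).symm.trans
    ((ContinuousMap.inner_toLp _ _ _).trans ?_)
  rw [← integral_complex_ofReal]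
  refine integral_congr_ae (.of_forall fun s ↦ ?_)
  simp only [restrictTo_apply hf, mul_conj']
  push_cast
  rfl

lemma pi_mul_sq_mul_norm_sq_le_norm_restrictToL2_sq {Q : Set ℂ} [CompactSpace Q] {f : ℂ → ℂ}
    (hf : ContinuousOn f Q) {s : ℂ} {ρ : ℝ} (hρ : 0 < ρ) (hd : DifferentiableOn ℂ f (ball s ρ))
    (hQ : closedBall s ρ ⊆ Q) : π * ρ ^ 2 * ‖f s‖ ^ 2 ≤ ‖restrictToL2 Q f‖ ^ 2 := by
  have hQc : IsCompact Q := isCompact_iff_compactSpace.mpr ‹_›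
  have hcont : ContinuousOn f (closure (ball s ρ)) := by
    rw [closure_ball s hρ.ne']
    exact hf.mono hQ
  rw [norm_restrictToL2_sq hf]
  exact (pi_mul_sq_mul_norm_sq_le_integral_ball hρ.le ⟨hd, hcont⟩).trans
    (setIntegral_mono_set ((hf.norm.pow 2).integrableOn_compact hQc)
      (.of_forall fun z ↦ by positivity) (ball_subset_closedBall.trans hQ).eventuallyLE)

end AreaMeanValue

section Polylog

lemma norm_pow_succ_div_le (m k : ℕ) (z : ℂ) :
    ‖z ^ (k + 1) / ((k : ℂ) + 1) ^ (m + 1)‖ ≤ ‖z‖ ^ (k + 1) := by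
  rw [norm_div, norm_pow, norm_pow]
  have hk : 1 ≤ ‖(k : ℂ) + 1‖ := by
    rw [← Nat.cast_add_one, norm_natCast]
    exact_mod_cast Nat.succ_le_succ k.zero_le
  exact div_le_self (by positivity) (one_le_pow₀ hk)

lemma norm_polylog_sub_le (m : ℕ) {z : ℂ} (hz : ‖z‖ < 1) :
    ‖polylog m z - z‖ ≤ ‖z‖ ^ 2 * (1 - ‖z‖)⁻¹ := by
  have hgeom := hasSum_geometric_of_lt_one (norm_nonneg z) hz
  have hsum : Summable fun k : ℕ ↦ z ^ (k + 1) / ((k : ℂ) + 1) ^ (m + 1) :=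
    .of_norm_bounded ((summable_nat_add_iff 1).mpr hgeom.summable) (norm_pow_succ_div_le m · z)
  have htail : polylog m z - z =
      ∑' k : ℕ, z ^ (k + 1 + 1) / (((k + 1 : ℕ) : ℂ) + 1) ^ (m + 1) := by
    rw [polylog, hsum.tsum_eq_zero_add]
    simp
  rw [htail]
  refine tsum_of_norm_bounded (hgeom.mul_left (‖z‖ ^ 2)) fun k ↦ ?_
  refine (norm_pow_succ_div_le m (k + 1) z).trans_eq ?_
  ring

lemma differentiableOn_polylog (m : ℕ) : DifferentiableOn ℂ (polylog m) (Metric.ball 0 1) := by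
  intro z hz
  obtain ⟨r, hzr, hr⟩ := exists_between (mem_ball_zero_iff.mp hz)
  have hr0 : 0 ≤ r := (norm_nonneg z).trans hzr.le
  have hsum : Summable fun k : ℕ ↦ r ^ (k + 1) :=
    (summable_nat_add_iff 1).mpr (summable_geometric_of_lt_one hr0 hr)
  refine ((differentiableOn_tsum_of_summable_norm hsum (fun k ↦ ?_) Metric.isOpen_ball
    fun k w hw ↦ ?_).differentiableAt (Metric.isOpen_ball.mem_nhds
      (mem_ball_zero_iff.mpr hzr))).differentiableWithinAt
  · fun_prop
  · exact (norm_pow_succ_div_le m k w).trans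
      (pow_le_pow_left₀ (norm_nonneg w) (mem_ball_zero_iff.mp hw).le _)

end Polylog

section SummationByParts

variable {E : Type*} [NormedAddCommGroup E] [NormedSpace ℂ E]

lemma sum_Ico_smul_eq_sum_smul_sub (b : ℕ → ℂ) (u : ℕ → E) {N M : ℕ} (hNM : N ≤ M) :
    ∑ k ∈ Finset.Ico N M, b k • u k = (∑ k ∈ Finset.Ico N M, b k) • u M +
      ∑ k ∈ Finset.Ico N M, (∑ j ∈ Finset.Ico N (k + 1), b j) • (u k - u (k + 1)) := by
  induction M, hNM using Nat.le_induction with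
  | base => simp
  | succ M hNM ih =>
    simp only [Finset.sum_Ico_succ_top hNM, ih]
    module

lemma norm_sum_Ico_smul_le {b : ℕ → ℂ} {u : ℕ → E} {v : ℕ → ℝ} {N : ℕ}
    (hb : ∀ M, ‖∑ k ∈ Finset.Ico N M, b k‖ ≤ 1) (hu : ∀ k ≥ N, ‖u k‖ ≤ v k)
    (hsub : ∀ k ≥ N, ‖u k - u (k + 1)‖ ≤ v k - v (k + 1)) (M : ℕ) :
    ‖∑ k ∈ Finset.Ico N M, b k • u k‖ ≤ v N := by
  rcases le_total M N with hMN | hNM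
  · rw [Finset.Ico_eq_empty_of_le hMN, Finset.sum_empty, norm_zero]
    exact (norm_nonneg _).trans (hu N le_rfl)
  have hterm (c : ℂ) (x : E) (hc : ‖c‖ ≤ 1) : ‖c • x‖ ≤ ‖x‖ := by
    rw [norm_smul]
    exact mul_le_of_le_one_left (norm_nonneg x) hc
  rw [sum_Ico_smul_eq_sum_smul_sub b u hNM]
  calc _ ≤ v M + ∑ k ∈ Finset.Ico N M, (v k - v (k + 1)) :=
        norm_add_le_of_le ((hterm _ _ (hb M)).trans (hu M hNM)) <|
          norm_sum_le_of_le _ fun k hk ↦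
            (hterm _ _ (hb (k + 1))).trans (hsub k (Finset.mem_Ico.mp hk).1)
    _ = v N := by
        rw [Finset.sum_Ico_eq_sub _ hNM, Finset.sum_range_sub', Finset.sum_range_sub']
        ring

lemma sum_range_ite_neg_one_pow_count (p : ℕ → Prop) [DecidablePred p] (N : ℕ) :
    ∑ k ∈ Finset.range N, (if p k then (-1 : ℂ) ^ Nat.count p k else 0) =
      (1 - (-1) ^ Nat.count p N) / 2 := by
  induction N with
  | zero => simp
  | succ N ih =>
    rw [Finset.sum_range_succ, ih, Nat.count_succ]
    split_ifs <;> ring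

lemma norm_sum_Ico_ite_neg_one_pow_count_le_one (p : ℕ → Prop) [DecidablePred p] (N M : ℕ) :
    ‖∑ k ∈ Finset.Ico N M, (if p k then (-1 : ℂ) ^ Nat.count p k else 0)‖ ≤ 1 := by
  rcases le_total M N with hMN | hNM
  · simp [Finset.Ico_eq_empty_of_le hMN]
  rw [Finset.sum_Ico_eq_sub _ hNM, sum_range_ite_neg_one_pow_count,
    sum_range_ite_neg_one_pow_count, ← sub_div, sub_sub_sub_cancel_left, norm_div, norm_ofNat,
    div_le_one two_pos]
  refine (norm_sub_le _ _).trans_eq ?_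
  simp only [norm_pow, norm_neg, norm_one, one_pow]
  norm_num

end SummationByParts

section WeightedPowers

lemma norm_ofReal_cpow_neg_sub_ofReal_cpow_neg_le {s : ℂ} {σ x y : ℝ} (hσ : 0 < σ) (hs : σ ≤ s.re)
    (hx : 1 ≤ x) (hxy : x ≤ y) :
    ‖(y : ℂ) ^ (-s) - (x : ℂ) ^ (-s)‖ ≤ ‖s‖ / σ * (x ^ (-σ) - y ^ (-σ)) := by
  have hpos {t : ℝ} (ht : t ∈ Set.Icc x y) : 0 < t := by linarith [ht.1]
  have hs0 : -s ≠ 0 := fun h ↦ by simp [neg_eq_zero.mp h] at hs; linarith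
  have hf (t : ℝ) (ht : t ∈ Set.Icc x y) :
      HasDerivAt (fun t : ℝ ↦ (t : ℂ) ^ (-s) - (x : ℂ) ^ (-s)) (-s * (t : ℂ) ^ (-s - 1)) t := by
    exact (hasDerivAt_ofReal_cpow_const (hpos ht).ne' hs0).sub_const _
  have hB (t : ℝ) (ht : t ∈ Set.Icc x y) :
      HasDerivAt (fun t : ℝ ↦ ‖s‖ / σ * (x ^ (-σ) - t ^ (-σ))) (‖s‖ * t ^ (-σ - 1)) t := by
    convert! ((Real.hasDerivAt_rpow_const (.inl (hpos ht).ne')).const_sub (x ^ (-σ))).const_mul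
      (‖s‖ / σ) using 1
    field_simp
  refine image_norm_le_of_norm_deriv_right_le_deriv_boundary'
    (fun t ht ↦ (hf t ht).continuousAt.continuousWithinAt)
    (fun t ht ↦ (hf t (Set.Ico_subset_Icc_self ht)).hasDerivWithinAt) (by simp)
    (fun t ht ↦ (hB t ht).continuousAt.continuousWithinAt)
    (fun t ht ↦ (hB t (Set.Ico_subset_Icc_self ht)).hasDerivWithinAt) (fun t ht ↦ ?_)
    (Set.right_mem_Icc.mpr hxy)
  rw [norm_mul, norm_neg, norm_cpow_eq_rpow_re_of_pos (hpos (Set.Ico_subset_Icc_self ht))]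
  gcongr
  · linarith [ht.1]
  · simpa using hs

/-- The summand `n⁻ˢ / (log n)ᵐ`, for all integers `n`. -/
noncomputable def weightedCpow (m n : ℕ) (s : ℂ) : ℂ :=
  (n : ℂ) ^ (-s) / ((Real.log n ^ m : ℝ) : ℂ)

variable {m n N : ℕ} {s : ℂ} {σ : ℝ}

lemma norm_weightedCpow_le (hn : n ≠ 0) (hs : σ ≤ s.re) :
    ‖weightedCpow m n s‖ ≤ (n : ℝ) ^ (-σ) / Real.log n ^ m := by
  have hlog : 0 ≤ Real.log n ^ m := pow_nonneg (Real.log_natCast_nonneg n) m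
  rw [weightedCpow, norm_div, norm_real, Real.norm_of_nonneg hlog]
  exact div_le_div_of_nonneg_right (norm_natCast_cpow_neg_le hn hs) hlog

lemma rpow_neg_div_log_pow_le (hn : 2 ≤ n) :
    (n : ℝ) ^ (-σ) / Real.log n ^ m ≤ (n : ℝ) ^ (-σ) / Real.log 2 ^ m := by
  have : 0 < Real.log 2 := Real.log_pos one_lt_two
  gcongr
  exact_mod_cast hn

lemma tendsto_rpow_neg_div_log_pow (m : ℕ) (hσ : 0 < σ) :
    Tendsto (fun n : ℕ ↦ (n : ℝ) ^ (-σ) / Real.log n ^ m) atTop (𝓝 0) := by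
  have hpow : Tendsto (fun n : ℕ ↦ (n : ℝ) ^ (-σ) / Real.log 2 ^ m) atTop (𝓝 0) := by
    simpa using ((tendsto_rpow_neg_atTop hσ).comp tendsto_natCast_atTop_atTop).div_const
      (Real.log 2 ^ m)
  refine squeeze_zero' (.of_forall fun n ↦ ?_) ?_ hpow
  · have := Real.log_natCast_nonneg n
    positivity
  · filter_upwards [eventually_ge_atTop 2] with n hn using rpow_neg_div_log_pow_le hn

lemma norm_mul_ofReal_sub_mul_ofReal_le {A A' : ℂ} {a a' C L L' : ℝ} (hC : 0 ≤ C)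
    (hA : ‖A - A'‖ ≤ C * (a - a')) (hA' : ‖A'‖ ≤ a') (haa' : a' ≤ a) (hL : 0 ≤ L)
    (hLL' : L' ≤ L) : ‖A * L - A' * L'‖ ≤ (1 + C) * (a * L - a' * L') := by
  have hLsub : 0 ≤ L - L' := sub_nonneg.mpr hLL'
  calc ‖A * L - A' * L'‖ = ‖(A - A') * (L : ℂ) + A' * ((L - L' : ℝ) : ℂ)‖ := by
        push_cast
        ring_nf
    _ ≤ C * (a - a') * L + a' * (L - L') := by
        refine norm_add_le_of_le ?_ ?_ <;> rw [norm_mul, norm_real, Real.norm_of_nonneg ‹_›] <;>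
          gcongr
    _ ≤ (1 + C) * ((a - a') * L + a' * (L - L')) := by
        have h₁ : 0 ≤ (a - a') * L := mul_nonneg (sub_nonneg.mpr haa') hL
        have h₂ : 0 ≤ C * (a' * (L - L')) :=
          mul_nonneg hC (mul_nonneg ((norm_nonneg _).trans hA') hLsub)
        linarith
    _ = _ := by ring

lemma norm_weightedCpow_sub_succ_le (hn : 2 ≤ n) (hσ : 0 < σ) (hs : σ ≤ s.re) :
    ‖weightedCpow m n s - weightedCpow m (n + 1) s‖ ≤
      (1 + ‖s‖ / σ) * ((n : ℝ) ^ (-σ) / Real.log n ^ m) -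
      (1 + ‖s‖ / σ) * (((n + 1 : ℕ) : ℝ) ^ (-σ) / Real.log (n + 1 : ℕ) ^ m) := by
  have hn1 : (1 : ℝ) ≤ n := by exact_mod_cast one_le_two.trans hn
  have hlog : 0 < Real.log n := Real.log_pos (by exact_mod_cast hn)
  have hle : (n : ℝ) ≤ (n + 1 : ℕ) := by exact_mod_cast n.le_succ
  have hL : (Real.log (n + 1 : ℕ) ^ m)⁻¹ ≤ (Real.log n ^ m)⁻¹ := by gcongr
  have hA := norm_ofReal_cpow_neg_sub_ofReal_cpow_neg_le hσ hs hn1 hle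
  have hA' := norm_natCast_cpow_neg_le n.succ_ne_zero hs
  rw [ofReal_natCast, ofReal_natCast, norm_sub_rev] at hA
  have haa' : ((n + 1 : ℕ) : ℝ) ^ (-σ) ≤ (n : ℝ) ^ (-σ) :=
    Real.rpow_le_rpow_of_nonpos (by positivity) hle (neg_nonpos.mpr hσ.le)
  rw [← mul_sub]
  simp only [weightedCpow, div_eq_mul_inv _ (Real.log _ ^ m), div_eq_mul_inv _ (ofReal _),
    ← ofReal_inv]
  exact norm_mul_ofReal_sub_mul_ofReal_le (by positivity) hA hA' haa' (by positivity) hL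

end WeightedPowers

section PrimeTerms

/-- The summand `Li_{m+1}(p⁻ˢ w) / (log p)ᵐ` at a prime `p = n`, and `0` at all other integers. -/
noncomputable def primePolylogTerm (m n : ℕ) (w s : ℂ) : ℂ :=
  if n.Prime then polylog m ((n : ℂ) ^ (-s) * w) / ((Real.log n ^ m : ℝ) : ℂ) else 0

lemma sum_primePolylogTerm_congr {S : Finset ℕ} {c c' : ℕ → ℂ} (h : ∀ n ∈ S, c n = c' n) (m : ℕ)
    (s : ℂ) :
    ∑ n ∈ S, primePolylogTerm m n (c n) s = ∑ n ∈ S, primePolylogTerm m n (c' n) s :=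
  Finset.sum_congr rfl fun n hn ↦ by rw [h n hn]

/-- The linear part `p⁻ˢ / (log p)ᵐ` of `primePolylogTerm`, again extended by `0`. -/
noncomputable def primeTerm (m n : ℕ) (s : ℂ) : ℂ :=
  if n.Prime then weightedCpow m n s else 0

/-- The sign that alternates along the primes. -/
noncomputable def alternatingSign (n : ℕ) : ℂ :=
  (-1) ^ Nat.count Nat.Prime n

lemma norm_alternatingSign (n : ℕ) : ‖alternatingSign n‖ = 1 := by
  rw [alternatingSign, norm_pow, norm_neg, norm_one, one_pow]

lemma eventually_forall_sum_Ico_le {v : ℕ → ℝ} (hv : Summable v) (hv0 : ∀ n, 0 ≤ v n) {ε : ℝ}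
    (hε : 0 < ε) : ∀ᶠ N in atTop, ∀ M, ∑ n ∈ Finset.Ico N M, v n ≤ ε := by
  filter_upwards [(tendsto_sum_nat_add v).eventually_le_const hε] with N hN M
  rw [Finset.sum_Ico_eq_sum_range]
  simp only [add_comm N]
  exact (((summable_nat_add_iff N).mpr hv).sum_le_tsum _ fun n _ ↦ hv0 _).trans hN

variable {m n : ℕ} {s w : ℂ} {σ : ℝ}

lemma rpow_neg_le_three_quarters (hn : 2 ≤ n) (hσ : 1 / 2 ≤ σ) : (n : ℝ) ^ (-σ) ≤ 3 / 4 := by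
  have hn2 : (2 : ℝ) ≤ n := by exact_mod_cast hn
  calc (n : ℝ) ^ (-σ) ≤ (n : ℝ) ^ (-(1 / 2) : ℝ) :=
        Real.rpow_le_rpow_of_exponent_le (by linarith) (neg_le_neg hσ)
    _ ≤ 2 ^ (-(1 / 2) : ℝ) := Real.rpow_le_rpow_of_nonpos two_pos hn2 (by norm_num)
    _ = (√2)⁻¹ := by rw [Real.rpow_neg two_pos.le, Real.sqrt_eq_rpow]
    _ ≤ 3 / 4 := by
        rw [inv_le_comm₀ (by positivity) (by norm_num)]
        exact Real.le_sqrt_of_sq_le (by norm_num)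

lemma norm_natCast_cpow_neg_mul_le (hn : 2 ≤ n) (hσ : 1 / 2 ≤ σ) (hs : σ ≤ s.re) (hw : ‖w‖ = 1) :
    ‖(n : ℂ) ^ (-s) * w‖ ≤ 3 / 4 := by
  rw [norm_mul, hw, mul_one]
  exact (norm_natCast_cpow_neg_le (by lia) hs).trans (rpow_neg_le_three_quarters hn hσ)

lemma differentiableAt_primePolylogTerm (hs : 1 / 2 ≤ s.re) (hw : ‖w‖ = 1) :
    DifferentiableAt ℂ (primePolylogTerm m n w) s := by
  unfold primePolylogTerm
  split_ifs with hn
  · refine DifferentiableAt.div_const (.comp s (g := polylog m) ?_ ?_) _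
    · refine (differentiableOn_polylog m).differentiableAt
        (Metric.isOpen_ball.mem_nhds (mem_ball_zero_iff.mpr ?_))
      exact (norm_natCast_cpow_neg_mul_le hn.two_le le_rfl hs hw).trans_lt (by norm_num)
    · exact (differentiable_natCast_cpow_neg hn.ne_zero s).mul_const w
  · exact differentiableAt_const 0

lemma differentiable_primeTerm (m n : ℕ) : Differentiable ℂ (primeTerm m n) := by
  unfold primeTerm weightedCpow
  split_ifs with hn
  · exact (differentiable_natCast_cpow_neg hn.ne_zero).div_const _
  · exact differentiable_const 0

lemma norm_primeTerm_le (hs : σ ≤ s.re) :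
    ‖primeTerm m n s‖ ≤ (n : ℝ) ^ (-σ) / Real.log 2 ^ m := by
  unfold primeTerm
  split_ifs with hn
  · exact (norm_weightedCpow_le hn.ne_zero hs).trans (rpow_neg_div_log_pow_le hn.two_le)
  · rw [norm_zero]
    have := Real.log_pos one_lt_two
    positivity

lemma summable_rpow_neg_sq (hσ : 1 / 2 < σ) : Summable fun n : ℕ ↦ ((n : ℝ) ^ (-σ)) ^ 2 := by
  refine (Real.summable_nat_rpow (p := -σ * 2).mpr (by linarith)).congr fun n ↦ ?_
  rw [Real.rpow_mul n.cast_nonneg, Real.rpow_two]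

lemma norm_primePolylogTerm_sub_le (hσ : 1 / 2 ≤ σ) (hs : σ ≤ s.re) (hw : ‖w‖ = 1) :
    ‖primePolylogTerm m n w s - w * primeTerm m n s‖ ≤
      4 / Real.log 2 ^ m * ((n : ℝ) ^ (-σ)) ^ 2 := by
  have : 0 < Real.log 2 := Real.log_pos one_lt_two
  unfold primePolylogTerm primeTerm
  split_ifs with hn
  · have hlog : Real.log 2 ≤ Real.log n := Real.log_le_log two_pos (by exact_mod_cast hn.two_le)
    have hz := norm_natCast_cpow_neg_mul_le hn.two_le hσ hs hw
    have hzσ : ‖(n : ℂ) ^ (-s) * w‖ ≤ (n : ℝ) ^ (-σ) := by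
      rw [norm_mul, hw, mul_one]
      exact norm_natCast_cpow_neg_le hn.ne_zero hs
    rw [weightedCpow, mul_div_assoc', mul_comm w, ← sub_div, norm_div, norm_real,
      Real.norm_of_nonneg (by positivity), div_mul_eq_mul_div]
    set z := (n : ℂ) ^ (-s) * w
    have hpolylog : ‖polylog m z - z‖ ≤ 4 * ((n : ℝ) ^ (-σ)) ^ 2 :=
      calc ‖polylog m z - z‖ ≤ ‖z‖ ^ 2 * (1 - ‖z‖)⁻¹ := norm_polylog_sub_le m (by linarith)
        _ ≤ ((n : ℝ) ^ (-σ)) ^ 2 * 4 := by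
            refine mul_le_mul (by gcongr) ?_ (inv_nonneg.mpr (by linarith)) (by positivity)
            rw [inv_le_comm₀ (by linarith) (by norm_num)]
            linarith
        _ = _ := mul_comm _ _
    gcongr
  · rw [mul_zero, sub_zero, norm_zero]
    positivity

lemma eventually_norm_sum_Ico_primePolylogTerm_sub_le (m : ℕ) (hσ : 1 / 2 < σ) {ε : ℝ}
    (hε : 0 < ε) :
    ∀ᶠ N in atTop, ∀ (M : ℕ) (w : ℕ → ℂ), (∀ n, ‖w n‖ = 1) → ∀ s : ℂ, σ ≤ s.re →
      ‖∑ n ∈ Finset.Ico N M, primePolylogTerm m n (w n) s -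
        ∑ n ∈ Finset.Ico N M, w n * primeTerm m n s‖ ≤ ε := by
  have : 0 < Real.log 2 := Real.log_pos one_lt_two
  filter_upwards [eventually_forall_sum_Ico_le
    ((summable_rpow_neg_sq hσ).mul_left (4 / Real.log 2 ^ m)) (fun n ↦ by positivity) hε]
    with N hN M w hw s hs
  rw [← Finset.sum_sub_distrib]
  exact (norm_sum_le_of_le _ fun n _ ↦ norm_primePolylogTerm_sub_le hσ.le hs (hw n)).trans (hN M)

lemma norm_sum_Ico_alternatingSign_mul_primeTerm_le {N : ℕ} (hN : 2 ≤ N) (hσ : 0 < σ)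
    (hs : σ ≤ s.re) (M : ℕ) :
    ‖∑ n ∈ Finset.Ico N M, alternatingSign n * primeTerm m n s‖ ≤
      (1 + ‖s‖ / σ) * ((N : ℝ) ^ (-σ) / Real.log N ^ m) := by
  have hterm (n : ℕ) : alternatingSign n * primeTerm m n s =
      (if n.Prime then (-1 : ℂ) ^ Nat.count Nat.Prime n else 0) • weightedCpow m n s := by
    rw [alternatingSign, primeTerm]
    split_ifs <;> simp only [smul_eq_mul, mul_zero, zero_mul]
  have hnorm (n : ℕ) (hn : N ≤ n) : ‖weightedCpow m n s‖ ≤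
      (1 + ‖s‖ / σ) * ((n : ℝ) ^ (-σ) / Real.log n ^ m) := by
    have := Real.log_natCast_nonneg n
    exact (norm_weightedCpow_le (by lia) hs).trans
      (le_mul_of_one_le_left (by positivity) (le_add_of_nonneg_right (by positivity)))
  simp only [hterm]
  exact norm_sum_Ico_smul_le (u := fun n ↦ weightedCpow m n s)
    (v := fun n : ℕ ↦ (1 + ‖s‖ / σ) * ((n : ℝ) ^ (-σ) / Real.log n ^ m))
    (norm_sum_Ico_ite_neg_one_pow_count_le_one Nat.Prime N) hnorm
    (fun n hn ↦ norm_weightedCpow_sub_succ_le (hN.trans hn) hσ hs) M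

lemma eventually_norm_sum_Ico_primePolylogTerm_alternatingSign_le (m : ℕ) (hσ : 1 / 2 < σ) (B : ℝ)
    {ε : ℝ} (hε : 0 < ε) :
    ∀ᶠ N in atTop, ∀ (M : ℕ) (s : ℂ), σ ≤ s.re → ‖s‖ ≤ B →
      ‖∑ n ∈ Finset.Ico N M, primePolylogTerm m n (alternatingSign n) s‖ ≤ ε := by
  have hlim : Tendsto (fun N : ℕ ↦ (1 + B / σ) * ((N : ℝ) ^ (-σ) / Real.log N ^ m)) atTop
      (𝓝 0) := by
    simpa using (tendsto_rpow_neg_div_log_pow m (by linarith : 0 < σ)).const_mul (1 + B / σ)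
  filter_upwards [hlim.eventually_le_const (half_pos hε), eventually_ge_atTop 2,
    eventually_norm_sum_Ico_primePolylogTerm_sub_le m hσ (half_pos hε)] with N hN hN2 hsub M s hs hB
  have := Real.log_natCast_nonneg N
  have halt : ‖∑ n ∈ Finset.Ico N M, alternatingSign n * primeTerm m n s‖ ≤ ε / 2 :=
    (norm_sum_Ico_alternatingSign_mul_primeTerm_le hN2 (by linarith) hs M).trans
      (le_trans (by gcongr) hN)
  linarith [norm_le_norm_add_norm_sub' (∑ n ∈ Finset.Ico N M,
    primePolylogTerm m n (alternatingSign n) s) (∑ n ∈ Finset.Ico N M,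
      alternatingSign n * primeTerm m n s), hsub M _ norm_alternatingSign s hs]

end PrimeTerms

section FiniteApproximation

open MeasureTheory Metric

lemma exists_Icc_of_isCompact_subset_Ioo {a b : ℝ} (hab : a < b) {S : Set ℝ} (hS : IsCompact S)
    (h : S ⊆ Set.Ioo a b) : ∃ l r, a < l ∧ l ≤ r ∧ r < b ∧ S ⊆ Set.Icc l r := by
  rcases S.eq_empty_or_nonempty with rfl | hne
  · exact ⟨(a + b) / 2, (a + b) / 2, by linarith, le_rfl, by linarith, Set.empty_subset _⟩
  · exact ⟨sInf S, sSup S, (h (hS.sInf_mem hne)).1, csInf_le_csSup hne hS.bddBelow hS.bddAbove,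
      (h (hS.sSup_mem hne)).2, fun x hx ↦ ⟨csInf_le hS.bddBelow hx, le_csSup hS.bddAbove hx⟩⟩

variable {a₁ a₂ y₁ y₂ : ℝ} {K : Set ℂ}

lemma exists_forall_closedBall_subset_Icc_reProdIm_Icc (ha : a₁ < a₂) (hy : y₁ < y₂)
    (hK : IsCompact K) (hKR : K ⊆ Set.Ioo a₁ a₂ ×ℂ Set.Ioo y₁ y₂) :
    ∃ l r b t ρ : ℝ, (a₁ < l ∧ l ≤ r ∧ r < a₂) ∧ (y₁ < b ∧ b ≤ t ∧ t < y₂) ∧ 0 < ρ ∧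
      ∀ s ∈ K, closedBall s ρ ⊆ Set.Icc l r ×ℂ Set.Icc b t := by
  obtain ⟨ρ, hρ, hthick⟩ := hK.exists_cthickening_subset_open (isOpen_Ioo.reProdIm isOpen_Ioo) hKR
  have hcompact : IsCompact (cthickening ρ K) := hK.cthickening
  obtain ⟨l, r, hl, hlr, hr, hre⟩ := exists_Icc_of_isCompact_subset_Ioo ha
    (hcompact.image continuous_re) (Set.image_subset_iff.mpr fun s hs ↦ (hthick hs).1)
  obtain ⟨b, t, hb, hbt, ht, him⟩ := exists_Icc_of_isCompact_subset_Ioo hy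
    (hcompact.image continuous_im) (Set.image_subset_iff.mpr fun s hs ↦ (hthick hs).2)
  refine ⟨l, r, b, t, ρ, ⟨hl, hlr, hr⟩, ⟨hb, hbt, ht⟩, hρ, fun s hs ↦ ?_⟩
  exact (closedBall_subset_cthickening hs ρ).trans fun z hz ↦
    ⟨hre (Set.mem_image_of_mem _ hz), him (Set.mem_image_of_mem _ hz)⟩

variable {Q : Set ℂ} [CompactSpace Q]

lemma restrictToL2_sum_mul_sub {ι : Type*} (S : Finset ι) (c : ι → ℂ) {u : ι → ℂ → ℂ}
    (hu : ∀ i, ContinuousOn (u i) Q) {F : ℂ → ℂ} (hF : ContinuousOn F Q) :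
    restrictToL2 Q (fun s ↦ ∑ i ∈ S, c i * u i s - F s) =
      ∑ i ∈ S, c i • restrictToL2 Q (u i) - restrictToL2 Q F := by
  simp only [restrictToL2, ← map_smul, ← map_sum, ← map_sub]
  congr 1
  ext s
  have hcont : ContinuousOn (fun s ↦ ∑ i ∈ S, c i * u i s - F s) Q :=
    (continuousOn_finsetSum S fun i _ ↦ (hu i).const_mul (c i)).sub hF
  rw [restrictTo_apply hcont]
  simp only [ContinuousMap.sub_apply, ContinuousMap.sum_apply, ContinuousMap.smul_apply,
    restrictTo_apply (hu _), restrictTo_apply hF, smul_eq_mul]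

lemma norm_apply_restrictTo_primeTerm (Φ : StrongDual ℂ C(Q, ℂ)) (m n : ℕ) :
    ‖Φ (restrictTo Q (primeTerm m n))‖ =
      if n.Prime then ‖Φ (restrictTo Q fun s ↦ (n : ℂ) ^ (-s))‖ / Real.log n ^ m else 0 := by
  have hterm : restrictTo Q (primeTerm m n) =
      (if n.Prime then ((Real.log n ^ m : ℝ) : ℂ)⁻¹ else 0) •
        restrictTo Q fun s ↦ (n : ℂ) ^ (-s) := by
    ext s
    rw [restrictTo_apply (differentiable_primeTerm m n).continuous.continuousOn, primeTerm]
    split_ifs with hn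
    · rw [ContinuousMap.smul_apply, restrictTo_natCast_cpow_neg_apply hn.ne_zero, weightedCpow,
        smul_eq_mul, div_eq_inv_mul]
    · rw [zero_smul, ContinuousMap.zero_apply]
  have hlog : 0 ≤ Real.log n ^ m := pow_nonneg (Real.log_natCast_nonneg n) m
  rw [hterm, map_smul, norm_smul]
  split_ifs
  · rw [norm_inv, norm_real, Real.norm_of_nonneg hlog, div_eq_inv_mul]
  · rw [norm_zero, zero_mul]

lemma summable_norm_restrictToL2_primeTerm_sq (m : ℕ) {σ : ℝ} (hσ : 1 / 2 < σ)
    (hQ : ∀ s ∈ Q, σ ≤ s.re) : Summable fun n ↦ ‖restrictToL2 Q (primeTerm m n)‖ ^ 2 := by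
  have hQc : IsCompact Q := isCompact_iff_compactSpace.mpr ‹_›
  refine .of_nonneg_of_le (fun n ↦ by positivity) (fun n ↦ ?_)
    ((summable_rpow_neg_sq hσ).mul_left ((Real.log 2 ^ m)⁻¹ ^ 2 * volume.real Q))
  rw [norm_restrictToL2_sq (differentiable_primeTerm m n).continuous.continuousOn]
  calc ∫ s in Q, ‖primeTerm m n s‖ ^ 2
      ≤ ‖∫ s in Q, ‖primeTerm m n s‖ ^ 2‖ := Real.le_norm_self _
    _ ≤ ((n : ℝ) ^ (-σ) / Real.log 2 ^ m) ^ 2 * volume.real Q := by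
        refine norm_setIntegral_le_of_norm_le_const hQc.measure_lt_top fun s hs ↦ ?_
        rw [norm_pow, norm_norm]
        gcongr
        exact norm_primeTerm_le (hQ s hs)
    _ = _ := by
        rw [div_eq_mul_inv]
        ring

variable {m : ℕ} {l r b t : ℝ}

lemma apply_restrictToL2_eq_zero_of_summable (ha₁ : 1 / 2 ≤ a₁) (ha₂ : a₂ < 1) (hl : a₁ < l)
    (hlr : l ≤ r) (hr : r < a₂) (hb : y₁ < b) (hbt : b ≤ t) (ht : t < y₂)
    (Φ : StrongDual ℂ (Lp ℂ 2 (volume.comap ((↑) : (Set.Icc l r ×ℂ Set.Icc b t : Set ℂ) → ℂ))))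
    (hΦ : Summable fun n ↦ ‖Φ (restrictToL2 _ (primeTerm m n))‖) {f : ℂ → ℂ}
    (hf : DifferentiableOn ℂ f (Set.Ioo a₁ a₂ ×ℂ Set.Ioo y₁ y₂)) :
    Φ (restrictToL2 _ f) = 0 := by
  refine apply_restrictTo_eq_zero_of_summable ha₁ ha₂ hl hlr hr hb hbt ht
    (Φ.comp (ContinuousMap.toLp 2 _ ℂ)) (m := m) ?_ hf
  simp only [← norm_apply_restrictTo_primeTerm]
  exact hΦ

lemma eventually_exists_unimodular_norm_restrictToL2_sum_Ico_sub_sq_le (m : ℕ) (ha₁ : 1 / 2 < a₁)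
    (ha₂ : a₂ < 1) (hl : a₁ < l) (hlr : l ≤ r) (hr : r < a₂) (hb : y₁ < b) (hbt : b ≤ t)
    (ht : t < y₂) {ε : ℝ} (hε : 0 < ε) :
    ∀ᶠ N in atTop, ∀ F : ℂ → ℂ, DifferentiableOn ℂ F (Set.Ioo a₁ a₂ ×ℂ Set.Ioo y₁ y₂) →
      ∀ᶠ M in atTop, ∃ c : ℕ → ℂ, (∀ n, ‖c n‖ = 1) ∧
        ‖restrictToL2 (Set.Icc l r ×ℂ Set.Icc b t)
          (fun s ↦ ∑ n ∈ Finset.Ico N M, c n * primeTerm m n s - F s)‖ ^ 2 ≤ 2 * ε ^ 2 := by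
  have hQR : Set.Icc l r ×ℂ Set.Icc b t ⊆ Set.Ioo a₁ a₂ ×ℂ Set.Ioo y₁ y₂ := fun s hs ↦
    ⟨Set.Icc_subset_Ioo hl hr hs.1, Set.Icc_subset_Ioo hb ht hs.2⟩
  set Q := Set.Icc l r ×ℂ Set.Icc b t
  filter_upwards [eventually_forall_sum_Ico_le (summable_norm_restrictToL2_primeTerm_sq m ha₁
    fun s hs ↦ (hQR hs).1.1.le) (fun n ↦ by positivity) (pow_pos hε 2)] with N hN F hF
  have hround := eventually_exists_unimodular_norm_sum_sub_sq_le
    (x := fun k ↦ restrictToL2 Q (primeTerm m (N + k))) (F := restrictToL2 Q F) (fun Φ hΦ ↦ by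
      refine apply_restrictToL2_eq_zero_of_summable ha₁.le ha₂ hl hlr hr hb hbt ht Φ (m := m) ?_ hF
      rw [← summable_nat_add_iff N]
      simpa only [add_comm N] using hΦ) hε
  filter_upwards [(tendsto_finset_range.comp (tendsto_sub_atTop_nat N)).eventually hround]
    with M ⟨c, hc, hcM⟩
  refine ⟨fun n ↦ c (n - N), fun n ↦ hc _, ?_⟩
  specialize hN M
  rw [Finset.sum_Ico_eq_sum_range] at hN
  rw [restrictToL2_sum_mul_sub _ _ (fun n ↦ (differentiable_primeTerm m n).continuous.continuousOn)
    (hF.continuousOn.mono hQR), Finset.sum_Ico_eq_sum_range]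
  simp only [Function.comp_apply] at hcM
  simp only [Nat.add_sub_cancel_left]
  linarith

lemma eventually_exists_unimodular_norm_sum_Ico_primeTerm_sub_le (m : ℕ) (ha₁ : 1 / 2 < a₁)
    (ha : a₁ < a₂) (ha₂ : a₂ < 1) (hy : y₁ < y₂) (hK : IsCompact K)
    (hKR : K ⊆ Set.Ioo a₁ a₂ ×ℂ Set.Ioo y₁ y₂) {ε : ℝ} (hε : 0 < ε) :
    ∀ᶠ N in atTop, ∀ F : ℂ → ℂ, DifferentiableOn ℂ F (Set.Ioo a₁ a₂ ×ℂ Set.Ioo y₁ y₂) →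
      ∀ᶠ M in atTop, ∃ c : ℕ → ℂ, (∀ n, ‖c n‖ = 1) ∧ ∀ s ∈ K,
        ‖∑ n ∈ Finset.Ico N M, c n * primeTerm m n s - F s‖ ≤ ε := by
  obtain ⟨l, r, b, t, ρ, ⟨hl, hlr, hr⟩, ⟨hb, hbt, ht⟩, hρ, hball⟩ :=
    exists_forall_closedBall_subset_Icc_reProdIm_Icc ha hy hK hKR
  have hQR : Set.Icc l r ×ℂ Set.Icc b t ⊆ Set.Ioo a₁ a₂ ×ℂ Set.Ioo y₁ y₂ := fun s hs ↦
    ⟨Set.Icc_subset_Ioo hl hr hs.1, Set.Icc_subset_Ioo hb ht hs.2⟩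
  filter_upwards [eventually_exists_unimodular_norm_restrictToL2_sum_Ico_sub_sq_le m ha₁ ha₂ hl hlr
    hr hb hbt ht (mul_pos hρ hε)] with N hN F hF
  filter_upwards [hN F hF] with M ⟨c, hc, hcM⟩
  refine ⟨c, hc, fun s hs ↦ ?_⟩
  have hd : DifferentiableOn ℂ (fun s ↦ ∑ n ∈ Finset.Ico N M, c n * primeTerm m n s - F s)
      (Set.Icc l r ×ℂ Set.Icc b t) :=
    .sub (.fun_sum fun n _ ↦ ((differentiable_primeTerm m n).const_mul (c n)).differentiableOn)
      (hF.mono hQR)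
  have hmean := (pi_mul_sq_mul_norm_sq_le_norm_restrictToL2_sq hd.continuousOn hρ
    (hd.mono (ball_subset_closedBall.trans (hball s hs))) (hball s hs)).trans hcM
  have hρε : ρ ^ 2 * (π * ‖∑ n ∈ Finset.Ico N M, c n * primeTerm m n s - F s‖ ^ 2) ≤
      ρ ^ 2 * (2 * ε ^ 2) := by linarith
  refine le_of_sq_le_sq ?_ hε.le
  nlinarith [le_of_mul_le_mul_left hρε (by positivity), Real.two_le_pi]

lemma eventually_exists_unimodular_norm_sum_Ico_primePolylogTerm_sub_le (m : ℕ) (ha₁ : 1 / 2 < a₁)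
    (ha : a₁ < a₂) (ha₂ : a₂ < 1) (hy : y₁ < y₂) (hK : IsCompact K)
    (hKR : K ⊆ Set.Ioo a₁ a₂ ×ℂ Set.Ioo y₁ y₂) {ε : ℝ} (hε : 0 < ε) :
    ∀ᶠ N in atTop, ∀ F : ℂ → ℂ, DifferentiableOn ℂ F (Set.Ioo a₁ a₂ ×ℂ Set.Ioo y₁ y₂) →
      ∀ᶠ M in atTop, ∃ c : ℕ → ℂ, (∀ n, ‖c n‖ = 1) ∧ ∀ s ∈ K,
        ‖∑ n ∈ Finset.Ico N M, primePolylogTerm m n (c n) s - F s‖ ≤ ε := by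
  filter_upwards [eventually_exists_unimodular_norm_sum_Ico_primeTerm_sub_le m ha₁ ha ha₂ hy hK hKR
    (half_pos hε), eventually_norm_sum_Ico_primePolylogTerm_sub_le m ha₁ (half_pos hε)]
    with N hN hsub F hF
  filter_upwards [hN F hF] with M ⟨c, hc, hcM⟩
  refine ⟨c, hc, fun s hs ↦ ?_⟩
  linarith [norm_sub_le_norm_sub_add_norm_sub
    (∑ n ∈ Finset.Ico N M, primePolylogTerm m n (c n) s)
    (∑ n ∈ Finset.Ico N M, c n * primeTerm m n s) (F s), hcM s hs, hsub M c hc s (hKR hs).1.1.le]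

theorem exists_unimodular_eventually_norm_sum_primePolylogTerm_sub_le (m : ℕ) (ha₁ : 1 / 2 < a₁)
    (ha : a₁ < a₂) (ha₂ : a₂ < 1) (hy : y₁ < y₂) (hK : IsCompact K)
    (hKR : K ⊆ Set.Ioo a₁ a₂ ×ℂ Set.Ioo y₁ y₂) {f : ℂ → ℂ}
    (hf : DifferentiableOn ℂ f (Set.Ioo a₁ a₂ ×ℂ Set.Ioo y₁ y₂)) {ε : ℝ} (hε : 0 < ε) :
    ∃ c : ℕ → ℂ, (∀ n, ‖c n‖ = 1) ∧ (∀ᶠ n in atTop, c n = alternatingSign n) ∧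
      ∀ᶠ M in atTop, ∀ s ∈ K,
        ‖∑ n ∈ Finset.range M, primePolylogTerm m n (c n) s - f s‖ ≤ ε := by
  obtain ⟨B, hB⟩ := hK.isBounded.exists_norm_le
  obtain ⟨N₁, hN₁⟩ := (eventually_exists_unimodular_norm_sum_Ico_primePolylogTerm_sub_le m ha₁ ha
    ha₂ hy hK hKR (half_pos hε)).exists
  have hF : DifferentiableOn ℂ (fun s ↦ f s - ∑ n ∈ Finset.range N₁, primePolylogTerm m n 1 s)
      (Set.Ioo a₁ a₂ ×ℂ Set.Ioo y₁ y₂) :=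
    hf.sub <| .fun_sum fun n _ s hs ↦ (differentiableAt_primePolylogTerm
      (ha₁.trans hs.1.1).le norm_one).differentiableWithinAt
  obtain ⟨N₂, ⟨c, hc, hcN₂⟩, htail, hN₁₂⟩ := ((hN₁ _ hF).and
    ((eventually_norm_sum_Ico_primePolylogTerm_alternatingSign_le m ha₁ B (half_pos hε)).and
      (eventually_ge_atTop N₁))).exists
  let c' (n : ℕ) : ℂ := if n < N₁ then 1 else if n < N₂ then c n else alternatingSign n
  have halt (n : ℕ) (hn : N₂ ≤ n) : c' n = alternatingSign n := by
    simp only [c', if_neg (hN₁₂.trans hn).not_gt, if_neg hn.not_gt]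
  refine ⟨c', fun n ↦ ?_, eventually_atTop.mpr ⟨N₂, halt⟩, ?_⟩
  · simp only [c']
    split_ifs
    exacts [norm_one, hc n, norm_alternatingSign n]
  · filter_upwards [eventually_ge_atTop N₂] with M hM s hs
    rw [Finset.range_eq_Ico, ← Finset.sum_Ico_consecutive _ N₂.zero_le hM,
      ← Finset.sum_Ico_consecutive _ N₁.zero_le hN₁₂, ← Finset.range_eq_Ico]
    have hhead : ∀ n ∈ Finset.range N₁, c' n = 1 := fun n hn ↦ if_pos (Finset.mem_range.mp hn)
    have hmid : ∀ n ∈ Finset.Ico N₁ N₂, c' n = c n := fun n hn ↦ by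
      simp only [c', if_neg (Finset.mem_Ico.mp hn).1.not_gt, if_pos (Finset.mem_Ico.mp hn).2]
    rw [sum_primePolylogTerm_congr hhead, sum_primePolylogTerm_congr hmid,
      sum_primePolylogTerm_congr fun n hn ↦ halt n (Finset.mem_Ico.mp hn).1]
    calc _ = ‖(∑ n ∈ Finset.Ico N₁ N₂, primePolylogTerm m n (c n) s -
            (f s - ∑ n ∈ Finset.range N₁, primePolylogTerm m n 1 s)) +
          ∑ n ∈ Finset.Ico N₂ M, primePolylogTerm m n (alternatingSign n) s‖ := by
          ring_nf
      _ ≤ ε / 2 + ε / 2 :=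
          norm_add_le_of_le (hcN₂ s hs) (htail M s (hKR hs).1.1.le (hB s hs))
      _ = ε := add_halves ε

end FiniteApproximation

section Convergence

lemma exists_tendstoUniformlyOn_sum_primePolylogTerm (m : ℕ) {σ B : ℝ} (hσ : 1 / 2 < σ) {U : Set ℂ}
    (hre : ∀ s ∈ U, σ ≤ s.re) (hB : ∀ s ∈ U, ‖s‖ ≤ B) {c : ℕ → ℂ}
    (hc : ∀ᶠ n in atTop, c n = alternatingSign n) :
    ∃ g, TendstoUniformlyOn (fun M s ↦ ∑ n ∈ Finset.range M, primePolylogTerm m n (c n) s) g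
      atTop U := by
  have hcauchy : UniformCauchySeqOn
      (fun M s ↦ ∑ n ∈ Finset.range M, primePolylogTerm m n (c n) s) atTop U := by
    refine Metric.uniformCauchySeqOn_iff.mpr fun ε hε ↦ ?_
    obtain ⟨N, hN, hcN⟩ := ((eventually_norm_sum_Ico_primePolylogTerm_alternatingSign_le m hσ B
      (by positivity : 0 < ε / 3)).and (eventually_forall_ge_atTop.mpr hc)).exists
    have hdist (M : ℕ) (hM : N ≤ M) (s : ℂ) (hs : s ∈ U) :
        dist (∑ n ∈ Finset.range M, primePolylogTerm m n (c n) s)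
          (∑ n ∈ Finset.range N, primePolylogTerm m n (c n) s) ≤ ε / 3 := by
      rw [dist_eq, ← Finset.sum_Ico_eq_sub _ hM,
        sum_primePolylogTerm_congr fun n hn ↦ hcN n (Finset.mem_Ico.mp hn).1]
      exact hN M s (hre s hs) (hB s hs)
    refine ⟨N, fun M hM M' hM' s hs ↦ ?_⟩
    exact (dist_triangle_right _ _ _).trans_lt
      ((add_le_add (hdist M hM s hs) (hdist M' hM' s hs)).trans_lt (by linarith))
  exact ⟨fun s ↦ limUnder atTop fun M ↦ ∑ n ∈ Finset.range M, primePolylogTerm m n (c n) s,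
    hcauchy.tendstoUniformlyOn_of_tendsto fun s hs ↦
    (hcauchy.cauchySeq hs).tendsto_limUnder⟩

end Convergence

theorem polylog_series_dense
    (σL σR : ℝ) (h₁ : 1 / 2 < σL) (h₂ : σL < σR) (h₃ : σR < 1) (m : ℕ)
    (a b y₁ y₂ : ℝ) (ha : σL ≤ a) (hb : b ≤ σR) (hab : a < b) (hy : y₁ < y₂)
    (R : Set ℂ) (hR : R = {s : ℂ | s.re ∈ Set.Ioo a b ∧ s.im ∈ Set.Ioo y₁ y₂})
    (f : ℂ → ℂ) (hf : DifferentiableOn ℂ f R)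
    (K : Set ℂ) (hK : IsCompact K) (hKR : K ⊆ R)
    (ε : ℝ) (hε : 0 < ε) :
    ∃ c : Nat.Primes → ℂ, (∀ p, ‖c p‖ = 1) ∧
      ∃ g : ℂ → ℂ,
        TendstoLocallyUniformlyOn
          (fun (N : ℕ) (s : ℂ) => ∑ p ∈ Finset.range N,
            if h : p.Prime then
              polylog m ((p : ℂ) ^ (-s) * c ⟨p, h⟩) / (((Real.log p) ^ m : ℝ) : ℂ)
            else 0)
          g atTop R ∧
        ∀ s ∈ K, ‖g s - f s‖ < ε := by
  obtain rfl : R = Set.Ioo a b ×ℂ Set.Ioo y₁ y₂ := hR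
  have ha' : 1 / 2 < a := h₁.trans_le ha
  obtain ⟨c, hc, halt, happrox⟩ := exists_unimodular_eventually_norm_sum_primePolylogTerm_sub_le m
    ha' hab (hb.trans_lt h₃) hy hK hKR hf (half_pos hε)
  obtain ⟨B, hB⟩ :=
    ((Metric.isBounded_Ioo a b).reProdIm (Metric.isBounded_Ioo y₁ y₂)).exists_norm_le
  obtain ⟨g, hg⟩ :=
    exists_tendstoUniformlyOn_sum_primePolylogTerm m ha' (fun s hs ↦ hs.1.1.le) hB halt
  refine ⟨fun p ↦ c p, fun p ↦ hc p, g, ?_, fun s hs ↦ ?_⟩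
  · simpa only [dite_eq_ite, primePolylogTerm] using hg.tendstoLocallyUniformlyOn
  · have hlim : Tendsto (fun M ↦ ‖∑ n ∈ Finset.range M, primePolylogTerm m n (c n) s - f s‖) atTop
        (𝓝 ‖g s - f s‖) := ((hg.tendsto_at (hKR hs)).sub_const (f s)).norm
    exact (le_of_tendsto hlim (happrox.mono fun M hM ↦ hM s hs)).trans_lt (half_lt_self hε)
end

section
/- Let X > 0, let φ : [0,∞) → ℝ be smooth with compact support and φ = 1 on [0,1], and fix 1/2 < σ₀ < 1 and m ≥ 0. For Y large, the 'difference of Dirichlet polynomials' second moment satisfies ∫_{T/2}^{(5/2)T} |∑_{2 ≤ n ≤ Y} Λ(n) n^{-σ-it}(log n)^{-(m+1)} − ∑_{n ≥ 2} Λ(n) φ(n/X) n^{-σ-it}(log n)^{-(m+1)}|² dt ≪ T ∑_{n > X} Λ(n)²(1 − φ(n/X))² / (n^{2σ₀}(log n)^{2m+2}) + Y^{2 − 2σ₀} log Y, uniformly for σ ≥ σ₀ (with implied constant depending on σ₀ and m). -/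
open Complex MeasureTheory Filter

/-!
For `Y` beyond the support of `φ (· / X)`, the difference of the two sums is a single Dirichlet
polynomial of length `⌊Y⌋` with coefficients `Λ(n) (1 - φ(n / X)) / (log n) ^ (m + 1)`, which are
bounded and vanish for `n ≤ X`. Expanding its square and integrating, the diagonal terms give `T`
times the sum over `n > X`. An off-diagonal pair `n ≠ l` oscillates with frequency `log (n / l)`,
and `1 / |log (n / l)| ≤ 1 + min n l / |n - l|`: the first term contributes the square of
`∑ n ^ (-σ₀) ≪ Y ^ (1 - σ₀)`, the second a harmonic sum times `∑ n ^ (1 - 2σ₀) ≪ Y ^ (2 - 2σ₀)`.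
-/

open Finset
open scoped ComplexConjugate

section ExponentialSums

lemma norm_integral_exp_ofReal_mul_I_le {ν : ℝ} (hν : ν ≠ 0) (α β : ℝ) :
    ‖∫ t in α..β, exp ((ν * t : ℝ) * I)‖ ≤ 2 / |ν| := by
  have hνI : (ν : ℂ) * I ≠ 0 := mul_ne_zero (ofReal_ne_zero.2 hν) I_ne_zero
  have hval : ∫ t in α..β, exp ((ν * t : ℝ) * I) =
      (exp ((ν * β : ℝ) * I) - exp ((ν * α : ℝ) * I)) / (ν * I) := by
    simpa [mul_right_comm] using integral_exp_mul_complex (a := α) (b := β) hνI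
  calc ‖∫ t in α..β, exp ((ν * t : ℝ) * I)‖
      ≤ (‖exp ((ν * β : ℝ) * I)‖ + ‖exp ((ν * α : ℝ) * I)‖) / |ν| := by
        rw [hval, norm_div, norm_mul, norm_I, mul_one, norm_real, Real.norm_eq_abs]
        gcongr
        exact norm_sub_le _ _
    _ = 2 / |ν| := by rw [norm_exp_ofReal_mul_I, norm_exp_ofReal_mul_I, one_add_one_eq_two]

variable {ι : Type*} (S : Finset ι) (c : ι → ℂ) (ω : ι → ℝ)

lemma norm_sq_sum_mul_exp_eq (t : ℝ) :
    ((‖∑ j ∈ S, c j * exp ((ω j * t : ℝ) * I)‖ ^ 2 : ℝ) : ℂ) =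
      ∑ j ∈ S, (‖c j‖ : ℂ) ^ 2 +
        ∑ p ∈ S.offDiag, c p.1 * conj (c p.2) * exp (((ω p.1 - ω p.2) * t : ℝ) * I) := by
  classical
  have hterm (i j : ι) : c i * exp ((ω i * t : ℝ) * I) * conj (c j * exp ((ω j * t : ℝ) * I)) =
      c i * conj (c j) * exp (((ω i - ω j) * t : ℝ) * I) := by
    rw [map_mul, ← exp_conj, map_mul, conj_ofReal, conj_I, mul_mul_mul_comm, ← exp_add]
    push_cast
    ring_nf
  rw [ofReal_pow, ← mul_conj', map_sum, sum_mul_sum, ← sum_product', ← diag_union_offDiag,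
    sum_union (disjoint_diag_offDiag S), sum_diag]
  simp only [hterm]
  simp [mul_conj']

lemma integral_norm_sq_sum_mul_exp_eq (α β : ℝ) :
    ((∫ t in α..β, ‖∑ j ∈ S, c j * exp ((ω j * t : ℝ) * I)‖ ^ 2 : ℝ) : ℂ) =
      (((β - α) * ∑ j ∈ S, ‖c j‖ ^ 2 : ℝ) : ℂ) +
        ∑ p ∈ S.offDiag,
          c p.1 * conj (c p.2) * ∫ t in α..β, exp (((ω p.1 - ω p.2) * t : ℝ) * I) := by
  rw [← intervalIntegral.integral_ofReal]
  simp_rw [norm_sq_sum_mul_exp_eq]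
  rw [intervalIntegral.integral_add (by simp) (Continuous.intervalIntegrable (by fun_prop) _ _),
    intervalIntegral.integral_const,
    intervalIntegral.integral_finsetSum fun p _ ↦ Continuous.intervalIntegrable (by fun_prop) _ _]
  simp_rw [intervalIntegral.integral_const_mul]
  simp

theorem abs_integral_norm_sq_sum_mul_exp_sub_le {S : Finset ι} (c : ι → ℂ) {ω : ι → ℝ}
    (hω : Set.InjOn ω S) (α β : ℝ) :
    |(∫ t in α..β, ‖∑ j ∈ S, c j * exp ((ω j * t : ℝ) * I)‖ ^ 2) -
        (β - α) * ∑ j ∈ S, ‖c j‖ ^ 2| ≤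
      ∑ p ∈ S.offDiag, ‖c p.1‖ * ‖c p.2‖ * (2 / |ω p.1 - ω p.2|) := by
  rw [← Real.norm_eq_abs, ← norm_real, ofReal_sub, integral_norm_sq_sum_mul_exp_eq,
    add_sub_cancel_left]
  refine norm_sum_le_of_le _ fun p hp ↦ ?_
  obtain ⟨hp₁, hp₂, hne⟩ := mem_offDiag.1 hp
  rw [norm_mul, norm_mul, RCLike.norm_conj]
  gcongr
  exact norm_integral_exp_ofReal_mul_I_le (sub_ne_zero.2 (hω.ne hp₁ hp₂ hne)) α β

end ExponentialSums

section OffDiagonal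

lemma inv_abs_log_sub_log_le {x y : ℝ} (hx : 0 < x) (hy : 0 < y) (hxy : x ≠ y) :
    |Real.log x - Real.log y|⁻¹ ≤ 1 + min x y / |x - y| := by
  wlog h : y < x generalizing x y
  · rw [abs_sub_comm, min_comm, abs_sub_comm x]
    exact this hy hx hxy.symm (hxy.lt_of_le (not_lt.1 h))
  have hlog : (x - y) / x ≤ Real.log x - Real.log y := by
    have := Real.one_sub_inv_le_log_of_pos (div_pos hx hy)
    rwa [inv_div, Real.log_div hx.ne' hy.ne', one_sub_div hx.ne'] at this
  have hpos : 0 < (x - y) / x := div_pos (sub_pos.2 h) hx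
  rw [min_eq_right h.le, abs_of_pos (hpos.trans_le hlog), abs_of_pos (sub_pos.2 h)]
  calc (Real.log x - Real.log y)⁻¹ ≤ ((x - y) / x)⁻¹ := inv_anti₀ hpos hlog
    _ = 1 + y / (x - y) := by
      have := (sub_pos.2 h).ne'
      field_simp
      ring

lemma rpow_neg_mul_rpow_neg_mul_min_le {x y s : ℝ} (hx : 0 < x) (hy : 0 < y) (hs : 0 ≤ s) :
    x ^ (-s) * y ^ (-s) * min x y ≤ x ^ (1 - 2 * s) + y ^ (1 - 2 * s) := by
  wlog h : x ≤ y generalizing x y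
  · rw [mul_comm (x ^ (-s)), min_comm, add_comm]
    exact this hy hx (le_of_not_ge h)
  calc x ^ (-s) * y ^ (-s) * min x y ≤ x ^ (-s) * x ^ (-s) * x := by
        rw [min_eq_left h]
        gcongr ?_ * ?_ * _
        exact Real.rpow_le_rpow_of_nonpos hx h (neg_nonpos.2 hs)
    _ = x ^ (1 - 2 * s) := by
        rw [← Real.rpow_add hx, ← Real.rpow_add_one hx.ne']
        ring_nf
    _ ≤ x ^ (1 - 2 * s) + y ^ (1 - 2 * s) := le_add_of_nonneg_right (by positivity)

lemma rpow_neg_mul_rpow_neg_mul_inv_abs_log_sub_log_le {x y s : ℝ} (hx : 0 < x) (hy : 0 < y)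
    (hxy : x ≠ y) (hs : 0 ≤ s) :
    x ^ (-s) * y ^ (-s) * |Real.log x - Real.log y|⁻¹ ≤
      x ^ (-s) * y ^ (-s) + (x ^ (1 - 2 * s) + y ^ (1 - 2 * s)) * |x - y|⁻¹ :=
  calc x ^ (-s) * y ^ (-s) * |Real.log x - Real.log y|⁻¹
      ≤ x ^ (-s) * y ^ (-s) * (1 + min x y / |x - y|) := by
        gcongr
        exact inv_abs_log_sub_log_le hx hy hxy
    _ = x ^ (-s) * y ^ (-s) + x ^ (-s) * y ^ (-s) * min x y * |x - y|⁻¹ := by ring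
    _ ≤ _ := by
        gcongr
        exact rpow_neg_mul_rpow_neg_mul_min_le hx hy hs

lemma rpow_neg_le_rpow_sub_rpow_div {x s : ℝ} (hx : 1 ≤ x) (hs : 0 ≤ s) (hs' : s < 1) :
    x ^ (-s) ≤ (x ^ (1 - s) - (x - 1) ^ (1 - s)) / (1 - s) := by
  have hx₀ : 0 < x := one_pos.trans_le hx
  have hbernoulli : (1 + -x⁻¹) ^ (1 - s) ≤ 1 + (1 - s) * -x⁻¹ :=
    rpow_one_add_le_one_add_mul_self (neg_le_neg (inv_le_one_of_one_le₀ hx)) (by linarith)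
      (by linarith)
  have hsub : x - 1 = x * (1 + -x⁻¹) := by field_simp; ring
  have hrpow : x ^ (-s) = x ^ (1 - s) * x⁻¹ := by
    rw [← Real.rpow_neg_one, ← Real.rpow_add hx₀]
    ring_nf
  rw [le_div_iff₀ (by linarith), hsub,
    Real.mul_rpow hx₀.le (by linarith [inv_le_one_of_one_le₀ hx]), hrpow]
  linarith [mul_le_mul_of_nonneg_left hbernoulli (Real.rpow_nonneg hx₀.le (1 - s))]

lemma sum_Icc_rpow_neg_le {s : ℝ} (hs : 0 ≤ s) (hs' : s < 1) (N : ℕ) :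
    ∑ n ∈ Icc 1 N, (n : ℝ) ^ (-s) ≤ (N : ℝ) ^ (1 - s) / (1 - s) := by
  induction N with
  | zero => simp [Real.zero_rpow (sub_pos.2 hs').ne']
  | succ N ih =>
    rw [sum_Icc_succ_top (by lia)]
    have := rpow_neg_le_rpow_sub_rpow_div (x := (N + 1 : ℕ)) (by simp) hs hs'
    rw [sub_div, Nat.cast_add_one, add_sub_cancel_right] at this
    push_cast
    linarith

lemma sum_Icc_inv_le_one_add_log (N : ℕ) : ∑ k ∈ Icc 1 N, (k : ℝ)⁻¹ ≤ 1 + Real.log N := by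
  simpa [harmonic_eq_sum_Icc] using harmonic_le_one_add_log N

lemma sum_erase_inv_abs_sub_le {N l : ℕ} (hl : l ∈ Icc 1 N) :
    ∑ n ∈ (Icc 1 N).erase l, |(l : ℝ) - n|⁻¹ ≤ 2 * (1 + Real.log N) := by
  obtain ⟨hl₁, hlN⟩ := mem_Icc.1 hl
  have hsplit : (Icc 1 N).erase l = Ico 1 l ∪ Ioc l N := by grind
  have hdisj : Disjoint (Ico 1 l) (Ioc l N) := by
    rw [disjoint_left]
    grind
  have hbelow : ∑ n ∈ Ico 1 l, |(l : ℝ) - n|⁻¹ = ∑ k ∈ Ico 1 l, (k : ℝ)⁻¹ := by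
    refine sum_nbij' (l - ·) (l - ·) (by grind) (by grind) (by grind) (by grind) fun n hn ↦ ?_
    rw [← Nat.cast_sub (mem_Ico.1 hn).2.le, Nat.abs_cast]
  have habove : ∑ n ∈ Ioc l N, |(l : ℝ) - n|⁻¹ = ∑ k ∈ Icc 1 (N - l), (k : ℝ)⁻¹ := by
    refine sum_nbij' (· - l) (· + l) (by grind) (by grind) (by grind) (by grind) fun n hn ↦ ?_
    rw [abs_sub_comm, ← Nat.cast_sub (mem_Ioc.1 hn).1.le, Nat.abs_cast]
  have hsub {S : Finset ℕ} (hS : S ⊆ Icc 1 N) : ∑ k ∈ S, (k : ℝ)⁻¹ ≤ 1 + Real.log N :=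
    (sum_le_sum_of_subset_of_nonneg hS fun _ _ _ ↦ by positivity).trans
      (sum_Icc_inv_le_one_add_log N)
  rw [hsplit, sum_union hdisj, hbelow, habove, two_mul]
  exact add_le_add (hsub (by grind)) (hsub (by grind))

lemma sum_offDiag_eq_sum_sum_erase {ι M : Type*} [DecidableEq ι] [AddCommMonoid M]
    (S : Finset ι) (f : ι → ι → M) :
    ∑ p ∈ S.offDiag, f p.1 p.2 = ∑ i ∈ S, ∑ j ∈ S.erase i, f i j :=
  sum_finset_product' _ _ _ (by grind)

lemma sum_offDiag_rpow_mul_inv_abs_sub_le {s : ℝ} (hs : 1 / 2 ≤ s) (hs' : s < 1) (N : ℕ) :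
    ∑ p ∈ (Icc 1 N).offDiag, (p.1 : ℝ) ^ (1 - 2 * s) * |(p.1 : ℝ) - p.2|⁻¹ ≤
      (N : ℝ) ^ (2 - 2 * s) / (1 - s) * (1 + Real.log N) := by
  have hsum := sum_Icc_rpow_neg_le (s := 2 * s - 1) (by linarith) (by linarith) N
  rw [neg_sub, show 1 - (2 * s - 1) = 2 - 2 * s by ring] at hsum
  have := Real.log_natCast_nonneg N
  rw [sum_offDiag_eq_sum_sum_erase _
    fun n l : ℕ ↦ (n : ℝ) ^ (1 - 2 * s) * |(n : ℝ) - l|⁻¹]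
  calc ∑ n ∈ Icc 1 N, ∑ l ∈ (Icc 1 N).erase n, (n : ℝ) ^ (1 - 2 * s) * |(n : ℝ) - l|⁻¹
      ≤ ∑ n ∈ Icc 1 N, (n : ℝ) ^ (1 - 2 * s) * (2 * (1 + Real.log N)) := by
        refine sum_le_sum fun n hn ↦ ?_
        rw [← mul_sum]
        gcongr
        exact sum_erase_inv_abs_sub_le hn
    _ ≤ (N : ℝ) ^ (2 - 2 * s) / (2 - 2 * s) * (2 * (1 + Real.log N)) := by
        rw [← sum_mul]
        gcongr
    _ = (N : ℝ) ^ (2 - 2 * s) / (1 - s) * (1 + Real.log N) := by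
        rw [show 2 - 2 * s = 2 * (1 - s) by ring]
        have : 1 - s ≠ 0 := by linarith
        field_simp

lemma sum_offDiag_rpow_neg_mul_rpow_neg_le {s : ℝ} (hs : 0 ≤ s) (hs' : s < 1) (N : ℕ) :
    ∑ p ∈ (Icc 1 N).offDiag, (p.1 : ℝ) ^ (-s) * (p.2 : ℝ) ^ (-s) ≤
      (N : ℝ) ^ (2 - 2 * s) / (1 - s) ^ 2 :=
  calc ∑ p ∈ (Icc 1 N).offDiag, (p.1 : ℝ) ^ (-s) * (p.2 : ℝ) ^ (-s)
      ≤ ∑ p ∈ Icc 1 N ×ˢ Icc 1 N, (p.1 : ℝ) ^ (-s) * (p.2 : ℝ) ^ (-s) :=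
        sum_le_sum_of_subset_of_nonneg (by grind) fun _ _ _ ↦ by positivity
    _ = (∑ n ∈ Icc 1 N, (n : ℝ) ^ (-s)) ^ 2 := by rw [sq, sum_mul_sum, sum_product]
    _ ≤ ((N : ℝ) ^ (1 - s) / (1 - s)) ^ 2 := by
        gcongr
        exact sum_Icc_rpow_neg_le hs hs' N
    _ = (N : ℝ) ^ (2 - 2 * s) / (1 - s) ^ 2 := by
        rw [div_pow, ← Real.rpow_mul_natCast N.cast_nonneg, Nat.cast_two]
        ring_nf

theorem sum_offDiag_rpow_neg_mul_inv_abs_log_sub_log_le {s : ℝ} (hs : 1 / 2 ≤ s) (hs' : s < 1)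
    (N : ℕ) :
    ∑ p ∈ (Icc 1 N).offDiag,
        (p.1 : ℝ) ^ (-s) * (p.2 : ℝ) ^ (-s) * |Real.log p.1 - Real.log p.2|⁻¹ ≤
      (N : ℝ) ^ (2 - 2 * s) * (3 + 2 * Real.log N) / (1 - s) ^ 2 := by
  have hswap : ∑ p ∈ (Icc 1 N).offDiag, (p.2 : ℝ) ^ (1 - 2 * s) * |(p.1 : ℝ) - p.2|⁻¹ =
      ∑ p ∈ (Icc 1 N).offDiag, (p.1 : ℝ) ^ (1 - 2 * s) * |(p.1 : ℝ) - p.2|⁻¹ :=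
    sum_equiv (Equiv.prodComm ℕ ℕ) (by grind) fun p _ ↦ by
      simp [abs_sub_comm]
  have := Real.log_natCast_nonneg N
  calc _ ≤ ∑ p ∈ (Icc 1 N).offDiag, ((p.1 : ℝ) ^ (-s) * (p.2 : ℝ) ^ (-s) +
        ((p.1 : ℝ) ^ (1 - 2 * s) + (p.2 : ℝ) ^ (1 - 2 * s)) * |(p.1 : ℝ) - p.2|⁻¹) := by
        refine sum_le_sum fun p hp ↦ ?_
        simp only [mem_offDiag, mem_Icc] at hp
        exact rpow_neg_mul_rpow_neg_mul_inv_abs_log_sub_log_le (Nat.cast_pos.2 hp.1.1)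
          (Nat.cast_pos.2 hp.2.1.1) (Nat.cast_injective.ne hp.2.2) (by linarith)
    _ = ∑ p ∈ (Icc 1 N).offDiag, (p.1 : ℝ) ^ (-s) * (p.2 : ℝ) ^ (-s) +
        2 * ∑ p ∈ (Icc 1 N).offDiag, (p.1 : ℝ) ^ (1 - 2 * s) * |(p.1 : ℝ) - p.2|⁻¹ := by
        simp_rw [add_mul, sum_add_distrib]
        rw [hswap]
        ring
    _ ≤ (N : ℝ) ^ (2 - 2 * s) / (1 - s) ^ 2 +
        2 * ((N : ℝ) ^ (2 - 2 * s) / (1 - s) ^ 2 * (1 + Real.log N)) := by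
        gcongr
        · exact sum_offDiag_rpow_neg_mul_rpow_neg_le (by linarith) hs' N
        · refine (sum_offDiag_rpow_mul_inv_abs_sub_le hs hs' N).trans ?_
          gcongr
          nlinarith
    _ = (N : ℝ) ^ (2 - 2 * s) * (3 + 2 * Real.log N) / (1 - s) ^ 2 := by ring

end OffDiagonal

section DirichletPolynomials

/-- The Dirichlet polynomial `∑_{1 ≤ n ≤ N} aₙ n⁻ˢ`. -/
noncomputable def dirichletPolynomial (a : ℕ → ℂ) (N : ℕ) (s : ℂ) : ℂ :=
  ∑ n ∈ Icc 1 N, a n / (n : ℂ) ^ s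

lemma natCast_cpow_neg_eq {n : ℕ} (hn : n ≠ 0) (σ t : ℝ) :
    (n : ℂ) ^ (-(σ + t * I : ℂ)) = ((n : ℝ) ^ (-σ) : ℝ) * exp ((-Real.log n * t : ℝ) * I) := by
  have hn' : (n : ℂ) ≠ 0 := Nat.cast_ne_zero.2 hn
  rw [neg_add, cpow_add _ _ hn', ofReal_cpow n.cast_nonneg, cpow_def_of_ne_zero hn' (-(t * I)),
    ← natCast_log]
  push_cast
  ring_nf

lemma dirichletPolynomial_eq_sum_mul_exp (a : ℕ → ℂ) (N : ℕ) (σ t : ℝ) :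
    dirichletPolynomial a N (σ + t * I) =
      ∑ n ∈ Icc 1 N, a n * ((n : ℝ) ^ (-σ) : ℝ) * exp ((-Real.log n * t : ℝ) * I) :=
  sum_congr rfl fun n hn ↦ by
    rw [div_eq_mul_inv, ← cpow_neg, natCast_cpow_neg_eq (by grind), mul_assoc]

lemma injOn_neg_log_Icc (N : ℕ) : Set.InjOn (fun n : ℕ ↦ -Real.log n) (Icc 1 N) := by
  intro n hn l hl h
  simp only [coe_Icc, Set.mem_Icc] at hn hl
  exact Nat.cast_injective <| Real.log_injOn_pos (Set.mem_Ioi.2 (Nat.cast_pos.2 hn.1))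
    (Set.mem_Ioi.2 (Nat.cast_pos.2 hl.1)) (neg_injective h)

theorem abs_integral_norm_sq_dirichletPolynomial_sub_le (a : ℕ → ℂ) (N : ℕ) (σ α β : ℝ) :
    |(∫ t in α..β, ‖dirichletPolynomial a N (σ + t * I)‖ ^ 2) -
        (β - α) * ∑ n ∈ Icc 1 N, (‖a n‖ * (n : ℝ) ^ (-σ)) ^ 2| ≤
      ∑ p ∈ (Icc 1 N).offDiag, ‖a p.1‖ * (p.1 : ℝ) ^ (-σ) * (‖a p.2‖ * (p.2 : ℝ) ^ (-σ)) *
        (2 / |Real.log p.1 - Real.log p.2|) := by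
  have hnorm (n : ℕ) : ‖a n * ((n : ℝ) ^ (-σ) : ℝ)‖ = ‖a n‖ * (n : ℝ) ^ (-σ) := by
    rw [norm_mul, norm_real, Real.norm_of_nonneg (by positivity)]
  simpa only [dirichletPolynomial_eq_sum_mul_exp, hnorm, neg_sub_neg, abs_sub_comm]
    using abs_integral_norm_sq_sum_mul_exp_sub_le (fun n ↦ a n * ((n : ℝ) ^ (-σ) : ℝ))
      (injOn_neg_log_Icc N) α β

lemma natCast_rpow_neg_le_of_le (n : ℕ) {σ₀ σ : ℝ} (hσ₀ : 0 < σ₀) (hσ : σ₀ ≤ σ) :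
    (n : ℝ) ^ (-σ) ≤ (n : ℝ) ^ (-σ₀) := by
  rcases n.eq_zero_or_pos with rfl | hn
  · simp [Real.zero_rpow, hσ₀.ne', (hσ₀.trans_le hσ).ne']
  · exact Real.rpow_le_rpow_of_exponent_le (Nat.one_le_cast.2 hn) (neg_le_neg hσ)

variable {a : ℕ → ℂ} {K σ₀ : ℝ}

theorem integral_norm_sq_dirichletPolynomial_le (ha : ∀ n, ‖a n‖ ≤ K) (hσ₀ : 1 / 2 ≤ σ₀)
    (hσ₀' : σ₀ < 1) {σ : ℝ} (hσ : σ₀ ≤ σ) {α β : ℝ} (hαβ : α ≤ β) (N : ℕ) :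
    ∫ t in α..β, ‖dirichletPolynomial a N (σ + t * I)‖ ^ 2 ≤
      (β - α) * ∑ n ∈ Icc 1 N, (‖a n‖ * (n : ℝ) ^ (-σ₀)) ^ 2 +
        2 * K ^ 2 / (1 - σ₀) ^ 2 * ((N : ℝ) ^ (2 - 2 * σ₀) * (3 + 2 * Real.log N)) := by
  have hK : 0 ≤ K := (norm_nonneg _).trans (ha 0)
  have hpow (n : ℕ) : (n : ℝ) ^ (-σ) ≤ (n : ℝ) ^ (-σ₀) :=
    natCast_rpow_neg_le_of_le n (by linarith) hσ
  have hcoeff (n : ℕ) : ‖a n‖ * (n : ℝ) ^ (-σ) ≤ K * (n : ℝ) ^ (-σ₀) :=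
    mul_le_mul (ha n) (hpow n) (by positivity) hK
  have hoff : ∑ p ∈ (Icc 1 N).offDiag, ‖a p.1‖ * (p.1 : ℝ) ^ (-σ) * (‖a p.2‖ * (p.2 : ℝ) ^ (-σ)) *
        (2 / |Real.log p.1 - Real.log p.2|) ≤
      2 * K ^ 2 / (1 - σ₀) ^ 2 * ((N : ℝ) ^ (2 - 2 * σ₀) * (3 + 2 * Real.log N)) :=
    calc _ ≤ ∑ p ∈ (Icc 1 N).offDiag, K * (p.1 : ℝ) ^ (-σ₀) * (K * (p.2 : ℝ) ^ (-σ₀)) *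
          (2 / |Real.log p.1 - Real.log p.2|) := by
          gcongr ∑ _ ∈ _, ?_ * ?_ * _ <;> exact hcoeff _
      _ = 2 * K ^ 2 * ∑ p ∈ (Icc 1 N).offDiag,
          (p.1 : ℝ) ^ (-σ₀) * (p.2 : ℝ) ^ (-σ₀) * |Real.log p.1 - Real.log p.2|⁻¹ := by
          rw [mul_sum]
          exact sum_congr rfl fun p _ ↦ by ring
      _ ≤ 2 * K ^ 2 *
          ((N : ℝ) ^ (2 - 2 * σ₀) * (3 + 2 * Real.log N) / (1 - σ₀) ^ 2) := by
          gcongr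
          exact sum_offDiag_rpow_neg_mul_inv_abs_log_sub_log_le hσ₀ hσ₀' N
      _ = _ := by ring
  have hdiag : (β - α) * ∑ n ∈ Icc 1 N, (‖a n‖ * (n : ℝ) ^ (-σ)) ^ 2 ≤
      (β - α) * ∑ n ∈ Icc 1 N, (‖a n‖ * (n : ℝ) ^ (-σ₀)) ^ 2 := by
    have := sub_nonneg.2 hαβ
    gcongr _ * ∑ _ ∈ _, (_ * ?_) ^ 2
    exact hpow _
  linarith [le_of_abs_le (abs_integral_norm_sq_dirichletPolynomial_sub_le a N σ α β)]

lemma summable_sq_norm_mul_rpow_neg (ha : ∀ n, ‖a n‖ ≤ K) (hσ₀ : 1 / 2 < σ₀) :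
    Summable fun n ↦ (‖a n‖ * (n : ℝ) ^ (-σ₀)) ^ 2 := by
  refine .of_nonneg_of_le (fun n ↦ sq_nonneg _) (fun n ↦ ?_)
    ((Real.summable_nat_rpow.2 (show -σ₀ * (2 : ℕ) < -1 by push_cast; linarith)).mul_left (K ^ 2))
  rw [Real.rpow_mul_natCast n.cast_nonneg, ← mul_pow]
  gcongr
  exact ha n

theorem integral_norm_sq_dirichletPolynomial_floor_le (ha : ∀ n, ‖a n‖ ≤ K) (hσ₀ : 1 / 2 < σ₀)
    (hσ₀' : σ₀ < 1) {σ : ℝ} (hσ : σ₀ ≤ σ) {α β : ℝ} (hαβ : α ≤ β) {Y : ℝ} (hY : 3 ≤ Y) :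
    ∫ t in α..β, ‖dirichletPolynomial a ⌊Y⌋₊ (σ + t * I)‖ ^ 2 ≤
      (β - α) * ∑' n, (‖a n‖ * (n : ℝ) ^ (-σ₀)) ^ 2 +
        10 * K ^ 2 / (1 - σ₀) ^ 2 * (Y ^ (2 - 2 * σ₀) * Real.log Y) := by
  have hY₀ : 0 < Y := by linarith
  have hlogY : 1 ≤ Real.log Y :=
    (Real.le_log_iff_exp_le hY₀).2 (by linarith [Real.exp_one_lt_d9])
  have hfloor : (⌊Y⌋₊ : ℝ) ≤ Y := Nat.floor_le hY₀.le
  have hlog : Real.log ⌊Y⌋₊ ≤ Real.log Y :=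
    Real.log_le_log (Nat.cast_pos.2 (Nat.floor_pos.2 (by linarith))) hfloor
  calc _ ≤ (β - α) * ∑ n ∈ Icc 1 ⌊Y⌋₊, (‖a n‖ * (n : ℝ) ^ (-σ₀)) ^ 2 +
        2 * K ^ 2 / (1 - σ₀) ^ 2 *
          ((⌊Y⌋₊ : ℝ) ^ (2 - 2 * σ₀) * (3 + 2 * Real.log ⌊Y⌋₊)) :=
        integral_norm_sq_dirichletPolynomial_le ha hσ₀.le hσ₀' hσ hαβ _
    _ ≤ (β - α) * ∑' n, (‖a n‖ * (n : ℝ) ^ (-σ₀)) ^ 2 +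
        2 * K ^ 2 / (1 - σ₀) ^ 2 * (Y ^ (2 - 2 * σ₀) * (5 * Real.log Y)) := by
        have := sub_nonneg.2 hαβ
        gcongr
        · exact (summable_sq_norm_mul_rpow_neg ha hσ₀).sum_le_tsum _ fun _ _ ↦ sq_nonneg _
        · linarith
        · linarith
    _ = _ := by ring

lemma sum_range_sub_tsum_eq_dirichletPolynomial {w : ℕ → ℂ} {N : ℕ} (ha : a 0 = 0)
    (hw : ∀ n, N < n → w n = 0) (s : ℂ) :
    ∑ n ∈ range (N + 1), a n / (n : ℂ) ^ s - ∑' n : ℕ, a n * w n / (n : ℂ) ^ s =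
      dirichletPolynomial (fun n ↦ a n * (1 - w n)) N s := by
  rw [tsum_eq_sum (s := range (N + 1)) fun n hn ↦ by simp [hw n (by grind)],
    ← sum_sub_distrib, dirichletPolynomial]
  symm
  refine sum_subset_zero_on_sdiff (by grind) (fun n hn ↦ ?_) fun n _ ↦ by ring
  obtain rfl : n = 0 := by grind
  simp [ha]

end DirichletPolynomials

section VonMangoldt

/-- The coefficients `Λ(n) / (log n) ^ (m + 1)` of the sums over `n ≥ 2`; division by
`log 0 = log 1 = 0` makes them `0` for `n < 2`, so that `n` may range over all of `ℕ`. -/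
noncomputable def vonMangoldtDivLogPow (m n : ℕ) : ℝ :=
  ArithmeticFunction.vonMangoldt n / Real.log n ^ (m + 1)

lemma vonMangoldtDivLogPow_nonneg (m n : ℕ) : 0 ≤ vonMangoldtDivLogPow m n :=
  div_nonneg ArithmeticFunction.vonMangoldt_nonneg (pow_nonneg (Real.log_natCast_nonneg n) _)

lemma vonMangoldtDivLogPow_le (m n : ℕ) : vonMangoldtDivLogPow m n ≤ (Real.log 2 ^ m)⁻¹ := by
  have hlog2 : 0 < Real.log 2 := Real.log_pos one_lt_two
  rcases lt_or_ge n 2 with hn | hn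
  · interval_cases n <;> simp [vonMangoldtDivLogPow, hlog2.le]
  · have hlog : Real.log 2 ≤ Real.log n := Real.log_le_log two_pos (mod_cast hn)
    have hpos : 0 < Real.log n := hlog2.trans_le hlog
    calc vonMangoldtDivLogPow m n ≤ Real.log n / Real.log n ^ (m + 1) := by
          rw [vonMangoldtDivLogPow]
          gcongr
          exact ArithmeticFunction.vonMangoldt_le_log
      _ = (Real.log n ^ m)⁻¹ := by rw [pow_succ, div_mul_cancel_right₀ hpos.ne']
      _ ≤ (Real.log 2 ^ m)⁻¹ := by gcongr

variable (m : ℕ) {φ : ℝ → ℝ} {X : ℝ}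

lemma norm_vonMangoldtDivLogPow_mul_one_sub_le {A : ℝ} (hφ : ∀ x, 0 ≤ x → |φ x| ≤ A)
    (hX : 0 < X) (n : ℕ) :
    ‖(vonMangoldtDivLogPow m n : ℂ) * (1 - φ (n / X))‖ ≤ (Real.log 2 ^ m)⁻¹ * (1 + A) := by
  have : 0 < Real.log 2 := Real.log_pos one_lt_two
  rw [norm_mul, norm_real, Real.norm_of_nonneg (vonMangoldtDivLogPow_nonneg m n)]
  gcongr
  · exact vonMangoldtDivLogPow_le m n
  · refine norm_sub_le_of_le norm_one.le ?_
    rw [norm_real]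
    exact hφ _ (by positivity)

lemma sq_norm_vonMangoldtDivLogPow_mul_one_sub_eq_ite (hφ₁ : ∀ x ∈ Set.Icc (0 : ℝ) 1, φ x = 1)
    (hX : 0 < X) (σ₀ : ℝ) (n : ℕ) :
    (‖(vonMangoldtDivLogPow m n : ℂ) * (1 - φ (n / X))‖ * (n : ℝ) ^ (-σ₀)) ^ 2 =
      if X < (n : ℝ) then
        ArithmeticFunction.vonMangoldt n ^ 2 * (1 - φ ((n : ℝ) / X)) ^ 2 /
          ((n : ℝ) ^ (2 * σ₀) * Real.log n ^ (2 * m + 2))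
      else 0 := by
  split_ifs with hn
  · have hpow : (n : ℝ) ^ (2 * σ₀) = ((n : ℝ) ^ σ₀) ^ 2 := by
      rw [mul_comm, ← Nat.cast_two, Real.rpow_mul_natCast n.cast_nonneg]
    have hnorm : ‖(vonMangoldtDivLogPow m n : ℂ) * (1 - φ (n / X))‖ =
        |vonMangoldtDivLogPow m n * (1 - φ (n / X))| := by
      rw [← Real.norm_eq_abs, ← norm_real]
      push_cast
      rfl
    rw [hpow, Real.rpow_neg n.cast_nonneg, hnorm, mul_pow, sq_abs, vonMangoldtDivLogPow]
    ring
  · have : φ (n / X) = 1 := hφ₁ _ ⟨by positivity, (div_le_one hX).2 (not_lt.1 hn)⟩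
    simp [this]

lemma vonMangoldt_sum_sub_tsum_eq_dirichletPolynomial {N : ℕ}
    (hN : ∀ n : ℕ, N < n → φ (n / X) = 0) (s : ℂ) :
    (∑ n ∈ range (N + 1), (ArithmeticFunction.vonMangoldt n : ℂ) /
        ((n : ℂ) ^ s * ((Real.log n ^ (m + 1) : ℝ) : ℂ))) -
      ∑' n : ℕ, (ArithmeticFunction.vonMangoldt n : ℂ) * (φ (n / X) : ℂ) /
        ((n : ℂ) ^ s * ((Real.log n ^ (m + 1) : ℝ) : ℂ)) =
      dirichletPolynomial (fun n ↦ vonMangoldtDivLogPow m n * (1 - φ (n / X))) N s := by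
  rw [← sum_range_sub_tsum_eq_dirichletPolynomial (by simp [vonMangoldtDivLogPow])
    fun n hn ↦ by rw [hN n hn, ofReal_zero]]
  simp only [vonMangoldtDivLogPow, ofReal_div, mul_comm ((_ : ℂ) ^ s), div_div, div_mul_eq_mul_div]

end VonMangoldt

theorem dirichlet_polynomial_second_moment_general {σ₀ : ℝ} (hσ₀ : 1 / 2 < σ₀) (hσ₀' : σ₀ < 1)
    (m : ℕ) (A : ℝ) :
    ∃ C > 0, ∀ φ : ℝ → ℝ, (∀ x, 0 ≤ x → |φ x| ≤ A) → (∀ᶠ x in atTop, φ x = 0) →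
      (∀ x ∈ Set.Icc (0 : ℝ) 1, φ x = 1) →
      ∀ X : ℝ, 0 < X → ∃ Y₀ : ℝ, ∀ Y : ℝ, Y₀ ≤ Y → ∀ T : ℝ, 0 < T → ∀ σ : ℝ, σ₀ ≤ σ →
      (∫ t in Set.Ioc (T / 2) (5 * T / 2),
        ‖(∑ n ∈ Finset.range (⌊Y⌋₊ + 1),
            (ArithmeticFunction.vonMangoldt n : ℂ) /
              ((n : ℂ) ^ ((σ : ℂ) + t * I) * (((Real.log n) ^ (m + 1) : ℝ) : ℂ)))
          - ∑' n : ℕ,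
              (ArithmeticFunction.vonMangoldt n : ℂ) * ((φ ((n : ℝ) / X) : ℝ) : ℂ) /
                ((n : ℂ) ^ ((σ : ℂ) + t * I) * (((Real.log n) ^ (m + 1) : ℝ) : ℂ))‖ ^ 2)
      ≤ C * (T * (∑' n : ℕ, if X < (n : ℝ) then
              (ArithmeticFunction.vonMangoldt n) ^ 2 * (1 - φ ((n : ℝ) / X)) ^ 2 /
                ((n : ℝ) ^ (2 * σ₀) * (Real.log n) ^ (2 * m + 2))
            else 0)
          + Y ^ (2 - 2 * σ₀) * Real.log Y) := by
  set K : ℝ := (Real.log 2 ^ m)⁻¹ * (1 + A)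
  set D : ℝ := 10 * K ^ 2 / (1 - σ₀) ^ 2
  refine ⟨max 2 D, by positivity, fun φ hφA hφ₀ hφ₁ X hX ↦ ?_⟩
  obtain ⟨R, hR⟩ := eventually_atTop.1 hφ₀
  refine ⟨max 3 (R * X), fun Y hY T hT σ hσ ↦ ?_⟩
  obtain ⟨hY3, hRY⟩ := max_le_iff.1 hY
  have hN (n : ℕ) (hn : ⌊Y⌋₊ < n) : φ (n / X) = 0 :=
    hR _ ((le_div_iff₀ hX).2 (hRY.trans (Nat.lt_of_floor_lt hn).le))
  have hT' : T / 2 ≤ 5 * T / 2 := by linarith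
  have hmean := integral_norm_sq_dirichletPolynomial_floor_le
    (norm_vonMangoldtDivLogPow_mul_one_sub_le m hφA hX) hσ₀ hσ₀' hσ hT' hY3
  simp_rw [vonMangoldt_sum_sub_tsum_eq_dirichletPolynomial m hN,
    ← sq_norm_vonMangoldtDivLogPow_mul_one_sub_eq_ite m hφ₁ hX σ₀]
  rw [← intervalIntegral.integral_of_le hT', mul_add, ← mul_assoc]
  refine hmean.trans (add_le_add ?_ ?_)
  · gcongr
    linarith [mul_le_mul_of_nonneg_right (le_max_left 2 D) hT.le]
  · have : 0 ≤ Real.log Y := Real.log_nonneg (by linarith)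
    gcongr
    exact le_max_right 2 D

theorem dirichlet_polynomial_second_moment
    (σ₀ : ℝ) (hσ₀ : 1 / 2 < σ₀) (hσ₀' : σ₀ < 1) (m : ℕ)
    (φ : ℝ → ℝ) (hφ : ContDiff ℝ (⊤ : ℕ∞) φ) (hφc : HasCompactSupport φ)
    (hφ1 : ∀ x ∈ Set.Icc (0 : ℝ) 1, φ x = 1) :
    ∃ C > 0, ∀ X : ℝ, 0 < X → ∃ Y₀ : ℝ, ∀ Y : ℝ, Y₀ ≤ Y → ∀ T : ℝ, 0 < T →
      ∀ σ : ℝ, σ₀ ≤ σ →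
      (∫ t in Set.Ioc (T / 2) (5 * T / 2),
        ‖(∑ n ∈ Finset.range (⌊Y⌋₊ + 1),
            (ArithmeticFunction.vonMangoldt n : ℂ) /
              ((n : ℂ) ^ ((σ : ℂ) + t * I) * (((Real.log n) ^ (m + 1) : ℝ) : ℂ)))
          - ∑' n : ℕ,
              (ArithmeticFunction.vonMangoldt n : ℂ) * ((φ ((n : ℝ) / X) : ℝ) : ℂ) /
                ((n : ℂ) ^ ((σ : ℂ) + t * I) * (((Real.log n) ^ (m + 1) : ℝ) : ℂ))‖ ^ 2)
      ≤ C * (T * (∑' n : ℕ, if X < (n : ℝ) then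
              (ArithmeticFunction.vonMangoldt n) ^ 2 * (1 - φ ((n : ℝ) / X)) ^ 2 /
                ((n : ℝ) ^ (2 * σ₀) * (Real.log n) ^ (2 * m + 2))
            else 0)
          + Y ^ (2 - 2 * σ₀) * Real.log Y) := by
  obtain ⟨A, hA⟩ := hφc.exists_bound_of_continuous hφ.continuous
  have hφ₀ : ∀ᶠ x in atTop, φ x = 0 := (hasCompactSupport_iff_eventuallyEq.1 hφc).filter_mono
    (atTop_le_cocompact.trans_eq coclosedCompact_eq_cocompact.symm)
  exact (dirichlet_polynomial_second_moment_general hσ₀ hσ₀' m A).imp fun C hC ↦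
    ⟨hC.1, hC.2 φ (fun x _ ↦ hA x) hφ₀ hφ1⟩
end
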